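/- arXiv:2403.16735 — 2 statements merged into one kernel-verified Lean document; each statement's English description precedes it below -/
import Mathlib

section
/- For every integer k ≥ 1 and every nonnegative integer n, ped(9n + 7) ≡ ped(9·5^{2k}·n + (57·5^{2k} − 1)/8) (mod 24). (Here 57·5^{2k} − 1 is divisible by 8, so the second argument is a nonnegative integer.) -/
/-- `ped n` is the number of partitions of `n` in which the even parts are
distinct (and the odd parts are unrestricted). -/
def ped (n : ℕ) : ℕ :=
  Fintype.card {p : n.Partition // ∀ x ∈ p.parts, Even x → p.parts.count x ≤ 1}

/-!
Let `φ` and `ψ` be Ramanujan's theta functions. Gauss's product formulas for `φ(-q)` and `ψ(-q)`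
give `∑ n, ped n * (-q) ^ n * φ(q) = ψ(q)`. Since `φ ≡ 1` modulo `2`, the series `1 / φ` is
congruent modulo `8` to `φ ^ 2 - 3 * φ + 3`, and modulo `3` it is `φ(q) ^ 2 / φ(q ^ 3)`. Hence
everything reduces to the `3`-dissections of `ψ * φ` and `ψ * φ ^ 2`, which yield
`ped (9 * n + 7) ≡ r (24 * n + 19)` modulo `8`, with `r M` the number of integer solutions of
`x ^ 2 + 2 * y ^ 2 = M`, and `ped (9 * n + 7) ≡ 0` modulo `3`. A prime `p ≡ 5, 7` modulo `8` is
inert in `ℤ[√-2]`, so `r (p ^ 2 * M) = r M`: every solution for `p ^ 2 * M` is divisible by `p`.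
-/

open Finset PowerSeries Filter
open scoped Topology PowerSeries.WithPiTopology

section RepresentationNumbers

/-- The set of representations of `M` by the quadratic form `x ^ 2 + 2 * y ^ 2`. -/
def reps (M : ℕ) : Set (ℤ × ℤ) := {p | p.1 ^ 2 + 2 * p.2 ^ 2 = M}

theorem mem_reps {M : ℕ} {x y : ℤ} : (x, y) ∈ reps M ↔ x ^ 2 + 2 * y ^ 2 = M := Iff.rfl

theorem finite_reps (M : ℕ) : (reps M).Finite := by
  refine ((Set.finite_Icc (-M : ℤ) M).prod (Set.finite_Icc (-M : ℤ) M)).subset ?_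
  rintro ⟨x, y⟩ h
  rw [mem_reps] at h
  have hx : |x| ≤ M := by nlinarith [Int.le_self_sq |x|, sq_abs x, sq_nonneg y]
  have hy : |y| ≤ M := by nlinarith [Int.le_self_sq |y|, sq_abs y, sq_nonneg x]
  exact ⟨abs_le.1 hx, abs_le.1 hy⟩

theorem ncard_reps_sq_mul_inter {d : ℕ} (hd : d ≠ 0) (M : ℕ) :
    (reps (d ^ 2 * M) ∩ {p | (d : ℤ) ∣ p.1 ∧ (d : ℤ) ∣ p.2}).ncard = (reps M).ncard := by
  have he : (fun p : ℤ × ℤ ↦ (d * p.1, d * p.2)).Injective := fun p q h ↦ by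
    simpa [hd, Prod.ext_iff] using h
  rw [← Set.ncard_preimage_of_injective_subset_range he]
  · congr 1
    ext ⟨u, v⟩
    have h : (d * u) ^ 2 + 2 * (d * v) ^ 2 = (d : ℤ) ^ 2 * (u ^ 2 + 2 * v ^ 2) := by ring
    simp [mem_reps, h, hd]
  · rintro ⟨_, _⟩ ⟨-, ⟨u, rfl⟩, ⟨v, rfl⟩⟩
    exact ⟨(u, v), rfl⟩

theorem dvd_of_mem_reps_of_dvd {p : ℕ} [Fact p.Prime] (hp : ¬ IsSquare (-2 : ZMod p)) {M : ℕ}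
    (hM : p ∣ M) {x y : ℤ} (h : (x, y) ∈ reps M) : (p : ℤ) ∣ x ∧ (p : ℤ) ∣ y := by
  simp only [← ZMod.intCast_zmod_eq_zero_iff_dvd]
  have hxy : (x : ZMod p) ^ 2 + 2 * (y : ZMod p) ^ 2 = 0 := by
    rw [← (ZMod.natCast_eq_zero_iff M p).2 hM]
    exact_mod_cast congrArg (Int.cast : ℤ → ZMod p) h
  have hy : (y : ZMod p) = 0 := by
    by_contra hy
    refine hp ⟨x / y, ?_⟩
    field_simp
    linear_combination -hxy
  simpa [hy] using hxy

theorem ncard_reps_prime_sq_mul {p : ℕ} [Fact p.Prime] (hp : ¬ IsSquare (-2 : ZMod p)) (M : ℕ) :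
    (reps (p ^ 2 * M)).ncard = (reps M).ncard := by
  rw [← ncard_reps_sq_mul_inter (NeZero.ne p) M, Set.inter_eq_left.2]
  exact fun ⟨_, _⟩ hq ↦ dvd_of_mem_reps_of_dvd hp ((dvd_pow_self p two_ne_zero).mul_right M) hq

theorem ncard_reps_sq_mul {m : ℕ} (hm : ∀ p, p.Prime → p ∣ m → ¬ IsSquare (-2 : ZMod p)) (M : ℕ) :
    (reps (m ^ 2 * M)).ncard = (reps M).ncard := by
  induction m using induction_on_primes with
  | zero => exact absurd ⟨0, rfl⟩ (hm 2 Nat.prime_two (dvd_zero 2))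
  | one => rw [one_pow, one_mul]
  | prime_mul p a hp ih =>
    have : Fact p.Prime := ⟨hp⟩
    rw [mul_pow, mul_assoc, ncard_reps_prime_sq_mul (hm p hp (dvd_mul_right p a)),
      ih fun q hq hqa ↦ hm q hq (hqa.mul_left p)]

theorem ncard_reps_sq_mul_of_mod_eight {m : ℕ}
    (hm : ∀ p, p.Prime → p ∣ m → p % 8 = 5 ∨ p % 8 = 7) (M : ℕ) :
    (reps (m ^ 2 * M)).ncard = (reps M).ncard := by
  refine ncard_reps_sq_mul (fun p hp hpm ↦ ?_) M
  have := Fact.mk hp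
  have h := hm p hp hpm
  rw [ZMod.exists_sq_eq_neg_two_iff (by lia)]
  lia

-- Multiplication by `1 + √-2`, an element of norm `3`, identifies the two sides.
theorem ncard_reps_three_mul_inter_sub (M : ℕ) :
    (reps (3 * M) ∩ {p | 3 ∣ p.1 - p.2}).ncard = (reps M).ncard := by
  have he : (fun p : ℤ × ℤ ↦ (p.1 - 2 * p.2, p.1 + p.2)).Injective := fun p q h ↦ by
    simp only [Prod.ext_iff] at h ⊢
    omega
  rw [← Set.ncard_preimage_of_injective_subset_range he]
  · congr 1
    ext ⟨u, v⟩
    have h1 : (3 : ℤ) ∣ u - 2 * v - (u + v) := ⟨-v, by ring⟩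
    have h2 : (u - 2 * v) ^ 2 + 2 * (u + v) ^ 2 = 3 * (u ^ 2 + 2 * v ^ 2) := by ring
    simp [mem_reps, h1, h2]
  · rintro ⟨x, y⟩ ⟨-, v, hv⟩
    exact ⟨(y + v, -v), Prod.ext (by dsimp only at hv ⊢; omega) (by simp)⟩

theorem ncard_reps_three_mul_inter_add (M : ℕ) :
    (reps (3 * M) ∩ {p | 3 ∣ p.1 + p.2}).ncard = (reps M).ncard := by
  let conj : ℤ × ℤ ≃ ℤ × ℤ := (Equiv.refl ℤ).prodCongr (Equiv.neg ℤ)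
  rw [← ncard_reps_three_mul_inter_sub, ← Set.ncard_preimage_of_injective_subset_range
    conj.injective (by simp)]
  congr 1
  ext ⟨u, v⟩
  simp [conj, mem_reps, sub_eq_add_neg]

theorem ncard_reps_three_mul (M : ℕ) :
    (reps (3 * M)).ncard + (reps (3 * M) ∩ {p | 3 ∣ p.1 ∧ 3 ∣ p.2}).ncard =
      2 * (reps M).ncard := by
  have h := Set.ncard_union_add_ncard_inter _ _
    ((finite_reps (3 * M)).inter_of_left {p | 3 ∣ p.1 - p.2})
    ((finite_reps (3 * M)).inter_of_left {p | 3 ∣ p.1 + p.2})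
  rw [ncard_reps_three_mul_inter_sub, ncard_reps_three_mul_inter_add, ← two_mul,
    ← Set.inter_union_distrib_left, ← Set.inter_inter_distrib_left] at h
  rw [← h]
  congr 2
  · refine (Set.inter_eq_left.2 ?_).symm
    rintro ⟨x, y⟩ hxy
    rw [mem_reps] at hxy
    refine Int.prime_three.dvd_or_dvd ⟨M - y ^ 2, ?_⟩
    push_cast at hxy
    linear_combination hxy
  · ext ⟨x, y⟩
    simp only [Set.mem_inter_iff, Set.mem_ofPred_eq]
    refine and_congr_right fun _ ↦ ?_
    omega

end RepresentationNumbers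

section Dissection

variable {R S : Type*} [CommRing R] [CommRing S] {m r : ℕ}

/-- The series `∑ n, c (m * n + r) * X ^ n` extracted from `∑ n, c n * X ^ n`. -/
noncomputable def dissection (m r : ℕ) : R⟦X⟧ →ₗ[R] R⟦X⟧ where
  toFun f := PowerSeries.mk fun n ↦ coeff (m * n + r) f
  map_add' f g := by ext n; simp
  map_smul' c f := by ext n; simp

@[simp]
theorem coeff_dissection (m r : ℕ) (f : R⟦X⟧) (n : ℕ) :
    coeff n (dissection m r f) = coeff (m * n + r) f :=
  coeff_mk (R := R) n fun n ↦ coeff (m * n + r) f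

theorem map_dissection (φ : R →+* S) (f : R⟦X⟧) :
    PowerSeries.map φ (dissection m r f) = dissection m r (PowerSeries.map φ f) := by
  ext n
  simp

theorem dissection_expand_mul (hm : m ≠ 0) (hr : r < m) (f g : R⟦X⟧) :
    dissection m r (expand m hm f * g) = f * dissection m r g := by
  ext n
  rw [coeff_dissection, coeff_mul, coeff_mul]
  symm
  refine sum_of_injOn (fun p ↦ (m * p.1, m * p.2 + r)) ?_ ?_ ?_ ?_
  · rintro ⟨a, b⟩ _ ⟨c, d⟩ _ h
    simpa [hm] using h
  · rintro ⟨a, b⟩ h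
    simp only [mem_coe, HasAntidiagonal.mem_antidiagonal] at h ⊢
    rw [← h]
    ring
  · rintro ⟨a, b⟩ h h'
    rw [coeff_expand_of_not_dvd, zero_mul]
    rintro ⟨c, rfl⟩
    rw [HasAntidiagonal.mem_antidiagonal] at h
    have hc : c ≤ n := Nat.lt_succ_iff.1 (Nat.lt_of_mul_lt_mul_left (a := m) (by linarith))
    refine h' ⟨(c, n - c), by simp [hc], Prod.ext rfl ?_⟩
    obtain ⟨d, rfl⟩ := Nat.exists_eq_add_of_le hc
    rw [mul_add] at h
    simp only [Nat.add_sub_cancel_left]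
    omega
  · rintro ⟨a, b⟩ -
    rw [coeff_expand_mul, coeff_dissection]

theorem dissection_X_pow {k : ℕ} (hk : k % m ≠ r % m) : dissection m r (X ^ k : R⟦X⟧) = 0 := by
  ext n
  rw [coeff_dissection, coeff_X_pow, if_neg, map_zero]
  rintro rfl
  simp at hk

theorem sum_X_pow_mul_expand_dissection (hm : m ≠ 0) (f : R⟦X⟧) :
    ∑ r ∈ range m, X ^ r * expand m hm (dissection m r f) = f := by
  ext n
  have hn : n - n % m = n / m * m := Nat.sub_eq_of_eq_add (Nat.div_add_mod' n m).symm
  rw [map_sum, sum_eq_single_of_mem (n % m) (mem_range.2 (Nat.mod_lt n (Nat.pos_of_ne_zero hm)))]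
  · rw [coeff_X_pow_mul', if_pos (Nat.mod_le n m), hn, mul_comm, coeff_expand_mul,
      coeff_dissection, Nat.div_add_mod]
  · intro r hr hne
    rw [coeff_X_pow_mul']
    split_ifs with hrn
    · refine coeff_expand_of_not_dvd _ _ _ fun h ↦ hne ?_
      rw [← (Nat.modEq_iff_dvd' hrn).2 h, Nat.mod_eq_of_lt (mem_range.1 hr)]
    · rfl

theorem pow_eq_expand (p : ℕ) [Fact p.Prime] (f : (ZMod p)⟦X⟧) :
    f ^ p = expand p (NeZero.ne p) f := by
  rw [← MvPowerSeries.map_frobenius_expand (p := p) (NeZero.ne p), ZMod.frobenius_zmod]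
  exact congrArg (fun g : _ →+* _ ↦ g _) MvPowerSeries.map_id

end Dissection

section CountingSeries

variable {ι κ : Type*} {f : ι → ℕ} {g : κ → ℕ}

/-- The generating series `∑ i, X ^ f i`, for `f` with finite fibers. An infinite fiber contributes
the coefficient `0`. -/
noncomputable def countSeries (f : ι → ℕ) : ℤ⟦X⟧ :=
  PowerSeries.mk fun n ↦ ((f ⁻¹' {n}).ncard : ℤ)

theorem coeff_countSeries (f : ι → ℕ) (n : ℕ) :
    coeff n (countSeries f) = ((f ⁻¹' {n}).ncard : ℤ) := coeff_mk _ _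

theorem coeff_countSeries_eq_ncard {n : ℕ} {S : Set κ} (e : ι → κ) (he : e.Injective)
    (h : ∀ i, f i = n ↔ e i ∈ S) (hS : S ⊆ Set.range e) :
    coeff n (countSeries f) = (S.ncard : ℤ) := by
  rw [coeff_countSeries, ← Set.ncard_preimage_of_injective_subset_range he hS]
  congr 2
  exact Set.ext h

theorem countSeries_comp_equiv (e : ι ≃ κ) (g : κ → ℕ) : countSeries (g ∘ e) = countSeries g := by
  ext n
  rw [coeff_countSeries g]
  exact coeff_countSeries_eq_ncard e e.injective (fun _ ↦ Iff.rfl) (by simp)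

theorem dissection_countSeries {m r : ℕ} (hm : m ≠ 0) (e : κ → ι) (he : e.Injective)
    (hfg : ∀ k, f (e k) = m * g k + r) (hf : ∀ i n, f i = m * n + r → i ∈ Set.range e) :
    dissection m r (countSeries f) = countSeries g := by
  ext n
  rw [coeff_dissection, coeff_countSeries f]
  refine (coeff_countSeries_eq_ncard (S := f ⁻¹' {m * n + r}) e he (fun k ↦ ?_) fun i ↦ hf i n).symm
  simp [hfg, hm]

theorem dissection_countSeries_eq_zero {m r : ℕ} (hf : ∀ i n, f i ≠ m * n + r) :
    dissection m r (countSeries f) = 0 := by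
  ext n
  rw [coeff_dissection, coeff_countSeries, Set.preimage_singleton_eq_empty.2, Set.ncard_empty,
    Nat.cast_zero, map_zero]
  rintro ⟨i, hi⟩
  exact hf i n hi

theorem expand_countSeries {k : ℕ} (hk : k ≠ 0) (f : ι → ℕ) :
    expand k hk (countSeries f) = countSeries fun i ↦ k * f i := by
  ext n
  by_cases h : k ∣ n
  · obtain ⟨m, rfl⟩ := h
    rw [coeff_expand_mul, coeff_countSeries f]
    refine (coeff_countSeries_eq_ncard id Function.injective_id (fun i ↦ ?_) (by simp)).symm
    simp [hk]
  · rw [coeff_expand_of_not_dvd _ _ _ h, coeff_countSeries, Set.preimage_singleton_eq_empty.2,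
      Set.ncard_empty, Nat.cast_zero]
    rintro ⟨i, rfl⟩
    exact h (dvd_mul_right _ _)

theorem finite_preimage_const_mul (hf : ∀ n, (f ⁻¹' {n}).Finite) {k : ℕ} (hk : k ≠ 0) (n : ℕ) :
    ((fun i ↦ k * f i) ⁻¹' {n}).Finite :=
  (hf (n / k)).subset fun _ hi ↦ (Nat.div_eq_of_eq_mul_right (Nat.pos_of_ne_zero hk) hi.symm).symm

theorem countSeries_mul (hf : ∀ n, (f ⁻¹' {n}).Finite) (hg : ∀ n, (g ⁻¹' {n}).Finite) :
    countSeries f * countSeries g = countSeries fun p : ι × κ ↦ f p.1 + g p.2 := by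
  classical
  ext n
  have h : (fun p : ι × κ ↦ f p.1 + g p.2) ⁻¹' {n} = (((antidiagonal n).biUnion fun p ↦
      (hf p.1).toFinset ×ˢ (hg p.2).toFinset : Finset (ι × κ)) : Set (ι × κ)) := by
    ext x
    simp
  rw [coeff_mul, coeff_countSeries, h, Set.ncard_coe_finset, card_biUnion, Nat.cast_sum]
  · refine sum_congr rfl fun p _ ↦ ?_
    rw [coeff_countSeries, coeff_countSeries, card_product, Set.ncard_eq_toFinset_card _ (hf _),
      Set.ncard_eq_toFinset_card _ (hg _), Nat.cast_mul]
  · intro p _ q _ hpq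
    simp only [Finset.disjoint_left, mem_product, Set.Finite.mem_toFinset, Set.mem_preimage,
      Set.mem_singleton_iff]
    rintro x ⟨h₁, h₂⟩ ⟨h₃, h₄⟩
    exact hpq (Prod.ext (h₁.symm.trans h₃) (h₂.symm.trans h₄))

theorem hasSum_X_pow (hf : ∀ n, (f ⁻¹' {n}).Finite) :
    HasSum (fun i ↦ (X : ℤ⟦X⟧) ^ f i) (countSeries f) := by
  rw [WithPiTopology.hasSum_iff_hasSum_coeff]
  intro n
  rw [coeff_countSeries, Set.ncard_eq_toFinset_card _ (hf n), Finset.cast_card]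
  simp only [coeff_X_pow]
  have h := hasSum_sum_of_ne_finset_zero (f := fun i ↦ if n = f i then (1 : ℤ) else 0)
    (s := (hf n).toFinset) (L := .unconditional _) fun i hi ↦ if_neg fun h ↦ hi (by simp [h])
  convert! h using 1
  refine sum_congr rfl fun i hi ↦ (if_pos ?_).symm
  simpa [eq_comm] using hi

end CountingSeries

section ThetaFunctions

/-- Ramanujan's theta function `φ(q) = ∑ z : ℤ, q ^ (z ^ 2)`. -/
noncomputable def thetaPhi : ℤ⟦X⟧ := countSeries fun z : ℤ ↦ z.natAbs ^ 2

/-- Ramanujan's theta function `ψ(q) = ∑ j : ℕ, q ^ (j * (j + 1) / 2)`. -/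
noncomputable def thetaPsi : ℤ⟦X⟧ := countSeries fun j : ℕ ↦ j * (j + 1) / 2

/-- The triangular number `z * (z + 1) / 2`, indexed by an integer. -/
def intTriangle (z : ℤ) : ℕ := (z * (z + 1) / 2).toNat

theorem two_mul_triangle (j : ℕ) : 2 * (j * (j + 1) / 2) = j * (j + 1) :=
  Nat.mul_div_cancel' (Nat.even_mul_succ_self j).two_dvd

theorem two_mul_intTriangle (z : ℤ) : 2 * (intTriangle z : ℤ) = z * (z + 1) := by
  have h0 : 0 ≤ z * (z + 1) := by
    rcases le_or_gt 0 z with h | h <;> nlinarith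
  rw [intTriangle, Int.toNat_of_nonneg (by lia),
    Int.mul_ediv_cancel' (Int.even_mul_succ_self z).two_dvd]

theorem intTriangle_natCast (j : ℕ) : intTriangle j = j * (j + 1) / 2 := by
  have h := two_mul_intTriangle j
  have h' := two_mul_triangle j
  zify at h'
  lia

theorem intTriangle_neg_one_sub (z : ℤ) : intTriangle (-1 - z) = intTriangle z := by
  rw [intTriangle, intTriangle]
  congr 2
  ring

theorem finite_preimage_natAbs_sq (n : ℕ) : ((fun z : ℤ ↦ z.natAbs ^ 2) ⁻¹' {n}).Finite := by
  refine (Set.finite_Icc (-n : ℤ) n).subset fun z hz ↦ ?_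
  have : z.natAbs ≤ z.natAbs ^ 2 := Nat.le_self_pow two_ne_zero _
  simp only [Set.mem_preimage, Set.mem_singleton_iff, Set.mem_Icc] at *
  lia

theorem finite_preimage_intTriangle (n : ℕ) : (intTriangle ⁻¹' {n}).Finite := by
  refine (Set.finite_Icc (-n - 1 : ℤ) (n + 1)).subset fun j hj ↦ ?_
  have h := two_mul_intTriangle j
  rw [Set.mem_preimage, Set.mem_singleton_iff] at hj
  rw [hj] at h
  constructor <;> nlinarith

theorem finite_preimage_triangle (n : ℕ) : ((fun j : ℕ ↦ j * (j + 1) / 2) ⁻¹' {n}).Finite := by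
  simp only [← intTriangle_natCast]
  exact .preimage (f := ((↑) : ℕ → ℤ)) Nat.cast_injective.injOn (finite_preimage_intTriangle n)

theorem finite_preimage_succ_sq (n : ℕ) : ((fun s : ℕ ↦ (s + 1) ^ 2) ⁻¹' {n}).Finite :=
  (Set.finite_singleton n).preimage ((Nat.pow_left_injective two_ne_zero).comp
    Nat.succ_injective).injOn

theorem thetaPhi_eq : thetaPhi = 1 + 2 * countSeries fun s : ℕ ↦ (s + 1) ^ 2 := by
  have h := (hasSum_nat_add_iff' 1).2 (hasSum_X_pow finite_preimage_natAbs_sq).nat_add_neg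
  simp only [Int.natAbs_neg, Int.natAbs_natCast, ← two_mul] at h
  have := h.unique ((hasSum_X_pow finite_preimage_succ_sq).mul_left 2)
  simp only [range_one, sum_singleton] at this
  rw [thetaPhi]
  linear_combination this

theorem constantCoeff_thetaPhi : constantCoeff thetaPhi = 1 := by
  rw [← coeff_zero_eq_constantCoeff_apply, thetaPhi, coeff_countSeries, Nat.cast_eq_one,
    Set.ncard_eq_one]
  exact ⟨0, by ext; simp⟩

theorem map_thetaPhi_ne_zero {R : Type*} [CommRing R] [Nontrivial R] :
    PowerSeries.map (Int.castRingHom R) thetaPhi ≠ 0 := fun h ↦ by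
  have := congrArg (coeff 0) h
  rw [coeff_map, coeff_zero_eq_constantCoeff_apply, constantCoeff_thetaPhi] at this
  simp at this

theorem two_mul_thetaPsi : 2 * thetaPsi = countSeries intTriangle := by
  have h : HasSum (fun j : ℕ ↦ (X : ℤ⟦X⟧) ^ intTriangle j) thetaPsi := by
    simpa only [thetaPsi, intTriangle_natCast] using hasSum_X_pow finite_preimage_triangle
  have h_neg : HasSum (fun j : ℕ ↦ (X : ℤ⟦X⟧) ^ intTriangle (-(j + 1))) thetaPsi := by
    convert h using 3 with j
    rw [← intTriangle_neg_one_sub]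
    congr 1
    ring
  rw [two_mul]
  exact (h.of_nat_of_neg_add_one (f := fun z ↦ X ^ intTriangle z) h_neg).unique
    (hasSum_X_pow finite_preimage_intTriangle)

/-- The nonnegative one of the two indices `z` and `-1 - z` of a triangular number. -/
def triangleIndex (z : ℤ) : ℕ := if 0 ≤ z then z.toNat else (-1 - z).toNat

theorem intTriangle_triangleIndex (z : ℤ) : intTriangle (triangleIndex z) = intTriangle z := by
  rw [triangleIndex]
  split_ifs with h
  · rw [Int.toNat_of_nonneg h]
  · rw [Int.toNat_of_nonneg (by lia), intTriangle_neg_one_sub]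

theorem bijective_triangleIndex_add_sub : Function.Bijective fun p : ℤ × ℕ ↦
    (triangleIndex (p.2 + p.1), triangleIndex (p.2 - p.1)) := by
  constructor
  · rintro ⟨a, b⟩ ⟨c, d⟩ h
    simp only [triangleIndex, Prod.mk.injEq] at h ⊢
    lia
  · rintro ⟨a, b⟩
    simp only [triangleIndex, Prod.mk.injEq, Prod.exists]
    rcases Nat.even_or_odd' (a + b) with ⟨c, h | h⟩
    · exact ⟨c - b, c, by lia⟩
    · rcases lt_or_ge b a with hab | hab
      · exact ⟨c + 1, a - c - 1, by lia⟩
      · exact ⟨-(c + 1), b - c - 1, by lia⟩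

-- The change of variables is `T (b + z) + T (b - z) = z ^ 2 + 2 * T b` for `T n = n * (n + 1) / 2`.
theorem thetaPhi_mul_expand_thetaPsi :
    thetaPhi * expand 2 two_ne_zero thetaPsi = thetaPsi ^ 2 := by
  rw [thetaPsi, expand_countSeries, sq, thetaPhi, countSeries_mul finite_preimage_natAbs_sq
    (finite_preimage_const_mul finite_preimage_triangle two_ne_zero),
    countSeries_mul finite_preimage_triangle finite_preimage_triangle,
    ← countSeries_comp_equiv (Equiv.ofBijective _ bijective_triangleIndex_add_sub)]
  congr 1
  funext ⟨z, b⟩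
  simp only [Function.comp_apply, Equiv.ofBijective_apply, ← intTriangle_natCast,
    intTriangle_triangleIndex]
  zify
  rw [sq_abs]
  linarith [two_mul_intTriangle b, two_mul_intTriangle (b + z), two_mul_intTriangle (b - z)]

theorem dissection_three_zero_thetaPhi :
    dissection 3 0 thetaPhi = expand 3 three_ne_zero thetaPhi := by
  rw [thetaPhi, expand_countSeries]
  refine dissection_countSeries three_ne_zero (3 * ·) (mul_right_injective₀ three_ne_zero)
    (fun k ↦ ?_) fun z n h ↦ ?_
  · rw [Int.natAbs_mul]
    ring
  · have : 3 ∣ z.natAbs := Nat.prime_three.dvd_of_dvd_pow (Dvd.intro n h.symm)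
    obtain ⟨k, rfl⟩ := Int.natCast_dvd.2 this
    exact ⟨k, rfl⟩

theorem dissection_three_two_thetaPhi : dissection 3 2 thetaPhi = 0 := by
  refine dissection_countSeries_eq_zero fun z n h ↦ ?_
  have : z.natAbs ^ 2 % 3 = 2 := by lia
  rw [Nat.pow_mod] at this
  have : z.natAbs % 3 < 3 := Nat.mod_lt _ three_pos
  interval_cases z.natAbs % 3 <;> simp_all

theorem mul_succ_mod_three (j : ℕ) : j * (j + 1) % 3 = if j % 3 = 1 then 2 else 0 := by
  have h : j % 3 = 0 ∨ j % 3 = 1 ∨ j % 3 = 2 := by lia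
  rcases h with h | h | h <;> simp [Nat.mul_mod, Nat.add_mod, h]

theorem dissection_three_one_thetaPsi :
    dissection 3 1 thetaPsi = expand 3 three_ne_zero thetaPsi := by
  rw [thetaPsi, expand_countSeries]
  refine dissection_countSeries three_ne_zero (fun k : ℕ ↦ 3 * k + 1) (fun a b h ↦ by lia)
    (fun k ↦ ?_) fun j n h ↦ ⟨j / 3, ?_⟩
  · have h₁ := two_mul_triangle k
    have h₂ := two_mul_triangle (3 * k + 1)
    lia
  · have h₁ := two_mul_triangle j
    have h₂ := mul_succ_mod_three j
    split_ifs at h₂ <;> lia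

theorem dissection_three_two_thetaPsi : dissection 3 2 thetaPsi = 0 := by
  refine dissection_countSeries_eq_zero fun j n h ↦ ?_
  have h₁ := two_mul_triangle j
  have h₂ := mul_succ_mod_three j
  split_ifs at h₂ <;> lia

end ThetaFunctions

section ThetaCoefficients

theorem two_mul_coeff_thetaPsi_mul_thetaPhi (n : ℕ) :
    2 * coeff n (thetaPsi * thetaPhi) = ((reps (8 * n + 1)).ncard : ℤ) := by
  have h : 2 * coeff n (thetaPsi * thetaPhi) = coeff n ((2 * thetaPsi) * thetaPhi) := by
    rw [two_mul, two_mul, add_mul, map_add]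
  rw [h, two_mul_thetaPsi, thetaPhi,
    countSeries_mul finite_preimage_intTriangle finite_preimage_natAbs_sq]
  refine coeff_countSeries_eq_ncard (fun p ↦ (2 * p.1 + 1, 2 * p.2)) ?_ ?_ ?_
  · rintro ⟨a, b⟩ ⟨c, d⟩ h
    simp only [Prod.mk.injEq] at h ⊢
    lia
  · rintro ⟨a, b⟩
    have ha := two_mul_intTriangle a
    rw [mem_reps]
    zify
    rw [sq_abs]
    constructor <;> intro h <;> linarith
  · rintro ⟨x, y⟩ h
    rw [mem_reps] at h
    push_cast at h
    obtain ⟨a, rfl | rfl⟩ := Int.even_or_odd' x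
    · ring_nf at h
      lia
    · obtain ⟨b, rfl | rfl⟩ := Int.even_or_odd' y
      · exact ⟨(a, b), rfl⟩
      · have ha := two_mul_intTriangle a
        ring_nf at h ha
        lia

theorem four_mul_coeff_thetaPsi_mul_expand_thetaPsi (n : ℕ) :
    4 * coeff n (thetaPsi * expand 2 two_ne_zero thetaPsi) = ((reps (8 * n + 3)).ncard : ℤ) := by
  have h : 4 * coeff n (thetaPsi * expand 2 two_ne_zero thetaPsi) =
      coeff n ((2 * thetaPsi) * expand 2 two_ne_zero (2 * thetaPsi)) := by
    rw [two_mul thetaPsi, map_add, mul_add, add_mul, map_add, map_add]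
    ring
  rw [h, two_mul_thetaPsi, expand_countSeries, countSeries_mul finite_preimage_intTriangle
    (finite_preimage_const_mul finite_preimage_intTriangle two_ne_zero)]
  refine coeff_countSeries_eq_ncard (fun p ↦ (2 * p.1 + 1, 2 * p.2 + 1)) ?_ ?_ ?_
  · rintro ⟨a, b⟩ ⟨c, d⟩ h
    simp only [Prod.mk.injEq] at h ⊢
    lia
  · rintro ⟨a, b⟩
    have ha := two_mul_intTriangle a
    have hb := two_mul_intTriangle b
    rw [mem_reps]
    zify
    constructor <;> intro h <;> linarith
  · rintro ⟨x, y⟩ h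
    rw [mem_reps] at h
    push_cast at h
    obtain ⟨a, rfl | rfl⟩ := Int.even_or_odd' x
    · ring_nf at h
      lia
    · obtain ⟨b, rfl | rfl⟩ := Int.even_or_odd' y
      · have ha := two_mul_intTriangle a
        ring_nf at h ha
        lia
      · exact ⟨(a, b), rfl⟩

theorem two_mul_coeff_expand_thetaPsi_mul_thetaPhi (n : ℕ) :
    2 * coeff n (expand 3 three_ne_zero (thetaPsi * thetaPhi)) =
      ((reps (3 * (8 * n + 3)) ∩ {p | 3 ∣ p.1 ∧ 3 ∣ p.2}).ncard : ℤ) := by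
  by_cases hn : 3 ∣ n
  · obtain ⟨k, rfl⟩ := hn
    rw [coeff_expand_mul, two_mul_coeff_thetaPsi_mul_thetaPhi,
      ← ncard_reps_sq_mul_inter three_ne_zero,
      show 3 ^ 2 * (8 * k + 1) = 3 * (8 * (3 * k) + 3) by ring]
    rfl
  · rw [coeff_expand_of_not_dvd _ _ _ hn, mul_zero, eq_comm, Nat.cast_eq_zero, Set.ncard_eq_zero
      ((finite_reps _).inter_of_left _), Set.eq_empty_iff_forall_notMem]
    rintro ⟨_, _⟩ ⟨h, ⟨x, rfl⟩, ⟨y, rfl⟩⟩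
    rw [mem_reps] at h
    push_cast at h
    ring_nf at h
    lia

theorem dissection_three_one_thetaPsi_mul_thetaPhi :
    dissection 3 1 (thetaPsi * thetaPhi) = 4 * (thetaPsi * expand 2 two_ne_zero thetaPsi) -
      expand 3 three_ne_zero (thetaPsi * thetaPhi) := by
  ext n
  have h₁ := two_mul_coeff_thetaPsi_mul_thetaPhi (3 * n + 1)
  have h₂ := four_mul_coeff_thetaPsi_mul_expand_thetaPsi n
  have h₃ := two_mul_coeff_expand_thetaPsi_mul_thetaPhi n
  have h₄ := ncard_reps_three_mul (8 * n + 3)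
  have h₅ (f : ℤ⟦X⟧) : coeff n (4 * f) = 4 * coeff n f := by
    rw [← map_ofNat (C (R := ℤ)) 4, coeff_C_mul]
  rw [show 8 * (3 * n + 1) + 1 = 3 * (8 * n + 3) by ring] at h₁
  zify at h₄
  rw [coeff_dissection, map_sub, h₅]
  linarith

end ThetaCoefficients

section ThreeDissection

-- Writing `φ(q) = φ(q ^ 9) + q * Ω(q ^ 3)` and `ψ(q) = A(q ^ 3) + q * ψ(q ^ 9)`, the product is
-- `q ^ 2 * A(q ^ 3) * Ω(q ^ 3) ^ 2 + q ^ 3 * ψ(q ^ 9) * Ω(q ^ 3) ^ 2`.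
theorem dissection_three_one_thetaPsi_mul_sub_sq :
    dissection 3 1 (thetaPsi *
      (thetaPhi - expand 3 three_ne_zero (expand 3 three_ne_zero thetaPhi)) ^ 2) = 0 := by
  have hφ := sum_X_pow_mul_expand_dissection three_ne_zero thetaPhi
  have hψ := sum_X_pow_mul_expand_dissection three_ne_zero thetaPsi
  simp only [sum_range_succ, range_zero, sum_empty, zero_add, pow_zero, one_mul, pow_one,
    dissection_three_zero_thetaPhi, dissection_three_two_thetaPhi, map_zero, mul_zero, add_zero,
    dissection_three_one_thetaPsi, dissection_three_two_thetaPsi] at hφ hψ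
  set A := dissection 3 0 thetaPsi
  set Ω := dissection 3 1 thetaPhi
  have h : thetaPsi *
      (thetaPhi - expand 3 three_ne_zero (expand 3 three_ne_zero thetaPhi)) ^ 2 =
      expand 3 three_ne_zero (A * Ω ^ 2) * X ^ 2 +
        expand 3 three_ne_zero (expand 3 three_ne_zero thetaPsi * Ω ^ 2) * X ^ 3 := by
    nth_rewrite 1 [← hφ]
    nth_rewrite 1 [← hψ]
    simp only [map_mul, map_pow]
    ring
  rw [h, map_add, dissection_expand_mul three_ne_zero (by simp),
    dissection_expand_mul three_ne_zero (by simp), dissection_X_pow (by simp),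
    dissection_X_pow (by simp), mul_zero, mul_zero, add_zero]

theorem dissection_three_one_thetaPsi_mul_thetaPhi_sq :
    dissection 3 1 (thetaPsi * thetaPhi ^ 2) =
      8 * expand 3 three_ne_zero thetaPhi * (thetaPsi * expand 2 two_ne_zero thetaPsi) -
        3 * expand 3 three_ne_zero (thetaPhi ^ 2 * thetaPsi) := by
  have h := dissection_three_one_thetaPsi_mul_sub_sq
  set a := expand 3 three_ne_zero thetaPhi with ha
  have h' : thetaPsi * (thetaPhi - expand 3 three_ne_zero a) ^ 2 = thetaPsi * thetaPhi ^ 2 -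
      expand 3 three_ne_zero (2 * a) * (thetaPsi * thetaPhi) +
      expand 3 three_ne_zero (a ^ 2) * thetaPsi := by
    simp only [map_mul, map_pow, map_ofNat]
    ring
  rw [h', map_add, map_sub, dissection_expand_mul three_ne_zero (by simp),
    dissection_expand_mul three_ne_zero (by simp), dissection_three_one_thetaPsi,
    dissection_three_one_thetaPsi_mul_thetaPhi, map_mul (expand 3 three_ne_zero), ← ha] at h
  rw [map_mul (expand 3 three_ne_zero), map_pow (expand 3 three_ne_zero), ← ha]
  linear_combination h

end ThreeDissection

section FiniteGaussIdentities

variable {R : Type*} [CommRing R] {q b u x : R} {n : ℕ}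

/-- The sum `∑ s ≤ n, (q; q)_n / (q; q)_s * (b; q)_s * u ^ s`, with the quotient of `q`-Pochhammer
symbols expanded as a product. It interpolates between a partial product (its term `s = 0`) and a
partial sum of a theta series. -/
def qPochhammerSum (q b u : R) (n : ℕ) : R :=
  ∑ s ∈ range (n + 1), (∏ r ∈ Ico s n, (1 - q * q ^ r)) * (∏ r ∈ range s, (1 - b * q ^ r)) * u ^ s

theorem sum_range_prod_Ico_telescope (q b u : R) (n : ℕ) :
    ∑ s ∈ range (n + 1), (∏ r ∈ Ico s n, (1 - q * q ^ r)) * (∏ r ∈ range s, (1 - b * q ^ r)) *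
      u ^ s * (u * (1 - b * q ^ s) - (1 - q ^ s)) =
      (∏ r ∈ range (n + 1), (1 - b * q ^ r)) * u ^ (n + 1) := by
  have h : ∀ m ≤ n, ∑ s ∈ range m, (∏ r ∈ Ico s n, (1 - q * q ^ r)) *
      (∏ r ∈ range s, (1 - b * q ^ r)) * u ^ s * (u * (1 - b * q ^ s) - (1 - q ^ s)) =
      (1 - q ^ m) * (∏ r ∈ Ico m n, (1 - q * q ^ r)) * (∏ r ∈ range m, (1 - b * q ^ r)) *
        u ^ m := by
    intro m hm
    induction m with
    | zero => simp
    | succ m ih =>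
      rw [sum_range_succ, ih (by lia), prod_eq_prod_Ico_succ_bot (by lia : m < n), prod_range_succ]
      ring
  rw [sum_range_succ, h n le_rfl, prod_range_succ, Ico_self, prod_empty]
  ring

theorem qPochhammerSum_succ (h : u * b = q ^ (n + 1)) :
    qPochhammerSum q b (u * q) (n + 1) = (1 - u) * qPochhammerSum q b u n +
      (∏ r ∈ range (n + 1), (1 - b * q ^ r)) * (u ^ (n + 1) + (u * q) ^ (n + 1)) := by
  rw [qPochhammerSum, sum_range_succ, Ico_self, prod_empty, one_mul, mul_add, ← add_assoc,
    add_left_inj, ← sum_range_prod_Ico_telescope, qPochhammerSum, mul_sum, ← sum_add_distrib]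
  refine sum_congr rfl fun s hs ↦ ?_
  rw [prod_Ico_succ_top (mem_range_succ_iff.1 hs)]
  linear_combination (∏ r ∈ Ico s n, (1 - q * q ^ r)) * (∏ r ∈ range s, (1 - b * q ^ r)) *
    u ^ s * q ^ s * h

theorem pow_dvd_qPochhammerSum_sub (q b : R) (h : x ^ n ∣ u) :
    x ^ n ∣ qPochhammerSum q b u n - ∏ r ∈ range n, (1 - q * q ^ r) := by
  rw [qPochhammerSum, sum_range_succ', range_zero, prod_empty, pow_zero, mul_one, mul_one,
    ← range_eq_Ico, add_sub_cancel_right]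
  exact dvd_sum fun s _ ↦ (h.trans (dvd_pow_self u s.succ_ne_zero)).mul_left _

theorem prod_mul_sum_pow_triangle (x : R) (n : ℕ) :
    (∏ r ∈ range n, (1 - x * (x ^ 2) ^ r)) * ∑ s ∈ range (2 * n + 1), x ^ (s * (s + 1) / 2) =
      qPochhammerSum (x ^ 2) x (x ^ (2 * n + 1)) n := by
  induction n with
  | zero => simp [qPochhammerSum]
  | succ n ih =>
    have h₁ : (2 * n + 1) * (2 * n + 1 + 1) / 2 = (n + 1) * (2 * n + 1) :=
      Nat.div_eq_of_eq_mul_left two_pos (by ring)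
    have h₂ : (2 * n + 2) * (2 * n + 2 + 1) / 2 = (n + 1) * (2 * n + 3) :=
      Nat.div_eq_of_eq_mul_left two_pos (by ring)
    rw [show x ^ (2 * (n + 1) + 1) = x ^ (2 * n + 1) * x ^ 2 by ring,
      qPochhammerSum_succ (by ring), ← ih, mul_add_one, sum_range_succ _ (2 * n + 2),
      sum_range_succ _ (2 * n + 1), h₁, h₂, prod_range_succ]
    ring

theorem prod_mul_sum_neg_pow_sq (x : R) (n : ℕ) :
    (∏ r ∈ range n, (1 - -x * x ^ r)) * (1 + ∑ s ∈ range n, 2 * (-x) ^ (s + 1) ^ 2) =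
      qPochhammerSum x (-1) (-x ^ (n + 1)) n := by
  induction n with
  | zero => simp [qPochhammerSum]
  | succ n ih =>
    have h : ∏ r ∈ range (n + 1), (1 - -1 * x ^ r) = 2 * ∏ r ∈ range n, (1 - -x * x ^ r) := by
      rw [prod_range_succ', pow_zero, mul_comm]
      ring_nf
    have h_sq : (-x) ^ (n + 1) ^ 2 = (-x ^ (n + 1)) ^ (n + 1) := by
      rcases Nat.even_or_odd (n + 1) with h | h
      · rw [(h.pow_of_ne_zero two_ne_zero).neg_pow, h.neg_pow, sq, pow_mul]
      · rw [h.pow.neg_pow, h.neg_pow, sq, pow_mul]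
    rw [pow_succ x (n + 1), ← neg_mul, qPochhammerSum_succ (by ring), ← ih, h, sum_range_succ,
      h_sq, prod_range_succ]
    ring

end FiniteGaussIdentities

section InfiniteProducts

/-- The infinite `q`-Pochhammer symbol `(x; q)_∞ = ∏ i, (1 - x * q ^ i)`, for `q` without constant
term. -/
noncomputable def qPochhammer (x q : ℤ⟦X⟧) : ℤ⟦X⟧ := ∏' i : ℕ, (1 - x * q ^ i)

variable {x q : ℤ⟦X⟧}

theorem tendsto_zero_of_pow_dvd {f : ℕ → ℤ⟦X⟧} (h : ∀ n, X ^ n ∣ f n) :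
    Tendsto f atTop (𝓝 0) := by
  rw [WithPiTopology.tendsto_iff_coeff_tendsto]
  refine fun d ↦ tendsto_const_nhds.congr' ?_
  filter_upwards [eventually_gt_atTop d] with n hn
  rw [map_zero, X_pow_dvd_iff.1 (h n) d hn]

theorem hasProd_qPochhammer (x : ℤ⟦X⟧) (hq : constantCoeff q = 0) :
    HasProd (fun i : ℕ ↦ 1 - x * q ^ i) (qPochhammer x q) := by
  refine Multipliable.hasProd ?_
  simp_rw [sub_eq_add_neg]
  refine WithPiTopology.multipliable_one_add_of_tendsto_order_atTop_nhds_top ℤ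
    (ENat.tendsto_nhds_top_iff_natCast_lt.2 fun n ↦ ?_)
  filter_upwards [eventually_gt_atTop n] with i hi
  rw [order_neg]
  calc (n : ℕ∞) < i := mod_cast hi
    _ ≤ order (q ^ i) := le_order_pow_of_constantCoeff_eq_zero i hq
    _ ≤ order (x * q ^ i) := le_add_self.trans (le_order_mul _ _)

theorem qPochhammer_ne_zero (hx : constantCoeff x = 0) (hq : constantCoeff q = 0) :
    qPochhammer x q ≠ 0 := fun h ↦ by
  have := (hasProd_qPochhammer x hq).map constantCoeff (WithPiTopology.continuous_constantCoeff ℤ)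
  simp only [Function.comp_def, map_sub, map_one, map_mul, hx, zero_mul, sub_zero, h, map_zero]
    at this
  exact one_ne_zero (hasProd_one.unique this)

theorem qPochhammer_eq_mul (x : ℤ⟦X⟧) (hq : constantCoeff q = 0) :
    qPochhammer x q = qPochhammer x (q ^ 2) * qPochhammer (x * q) (q ^ 2) := by
  have hq' : constantCoeff (q ^ 2) = 0 := by rw [map_pow, hq, zero_pow two_ne_zero]
  refine (hasProd_qPochhammer x hq).unique (HasProd.even_mul_odd ?_ ?_)
  · simpa only [pow_mul] using hasProd_qPochhammer x hq'
  · convert! hasProd_qPochhammer (x * q) hq' using 3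
    ring

theorem hasSum_neg_X_pow {ι : Type*} {f : ι → ℕ} (hf : ∀ n, (f ⁻¹' {n}).Finite) :
    HasSum (fun i ↦ (-X : ℤ⟦X⟧) ^ f i) (evalNegHom (countSeries f)) := by
  rw [WithPiTopology.hasSum_iff_hasSum_coeff]
  intro n
  have h := (WithPiTopology.hasSum_iff_hasSum_coeff ℤ).1 (hasSum_X_pow hf) n
  simpa only [← evalNegHom_X, ← map_pow, evalNegHom, coeff_rescale] using h.mul_left ((-1) ^ n)

theorem evalNegHom_thetaPsi_mul_qPochhammer :
    evalNegHom thetaPsi * qPochhammer (-X) (X ^ 2) = qPochhammer (X ^ 2) (X ^ 2) := by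
  have hX : constantCoeff (X ^ 2 : ℤ⟦X⟧) = 0 := by simp
  have h_sum := (hasSum_neg_X_pow finite_preimage_triangle).tendsto_sum_nat.comp
    (tendsto_atTop_mono (fun n ↦ (by lia : n ≤ 2 * n + 1)) tendsto_id)
  have h_dvd (n : ℕ) : X ^ n ∣ qPochhammerSum ((-X : ℤ⟦X⟧) ^ 2) (-X) ((-X) ^ (2 * n + 1)) n -
      ∏ r ∈ range n, (1 - (-X) ^ 2 * ((-X) ^ 2) ^ r) := by
    refine pow_dvd_qPochhammerSum_sub _ _ ?_
    rw [neg_pow]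
    exact (pow_dvd_pow X (by lia)).mul_left _
  simp only [← prod_mul_sum_pow_triangle] at h_dvd
  simp only [neg_sq] at h_dvd
  have := (tendsto_zero_of_pow_dvd h_dvd).add (hasProd_qPochhammer (X ^ 2) hX).tendsto_prod_nat
  simp only [sub_add_cancel, zero_add] at this
  rw [mul_comm]
  exact tendsto_nhds_unique ((hasProd_qPochhammer (-X) hX).tendsto_prod_nat.mul h_sum) this

theorem evalNegHom_thetaPhi_mul_qPochhammer :
    evalNegHom thetaPhi * qPochhammer (-X) X = qPochhammer X X := by
  have hX : constantCoeff (X : ℤ⟦X⟧) = 0 := constantCoeff_X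
  have h_sum : HasSum _ _ := (hasSum_neg_X_pow finite_preimage_succ_sq).mul_left 2
  have h_dvd (n : ℕ) : X ^ n ∣ qPochhammerSum (X : ℤ⟦X⟧) (-1) (-X ^ (n + 1)) n -
      ∏ r ∈ range n, (1 - X * X ^ r) := by
    exact pow_dvd_qPochhammerSum_sub _ _ (dvd_neg.2 (pow_dvd_pow X n.le_succ))
  simp only [← prod_mul_sum_neg_pow_sq] at h_dvd
  have := (tendsto_zero_of_pow_dvd h_dvd).add (hasProd_qPochhammer X hX).tendsto_prod_nat
  simp only [sub_add_cancel, zero_add] at this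
  rw [mul_comm, thetaPhi_eq, map_add, map_one, map_mul, map_ofNat]
  exact tendsto_nhds_unique ((hasProd_qPochhammer (-X) hX).tendsto_prod_nat.mul
    (h_sum.tendsto_sum_nat.const_add 1)) this

end InfiniteProducts

section PedSeries

/-- The generating function of `ped`. -/
noncomputable def pedSeries : ℤ⟦X⟧ := PowerSeries.mk fun n ↦ (ped n : ℤ)

theorem hasProd_powerSeriesMk_ped (R : Type*) [CommSemiring R] [TopologicalSpace R]
    [IsTopologicalSemiring R] [T2Space R] :
    HasProd (fun i : ℕ ↦ if Even (i + 1) then 1 + X ^ (i + 1) else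
      ∑' j : ℕ, (X : R⟦X⟧) ^ ((i + 1) * j)) (PowerSeries.mk fun n ↦ (ped n : R)) := by
  convert! Nat.Partition.hasProd_genFun (fun i c ↦ if Even i → c ≤ 1 then (1 : R) else 0) using 1
  · ext1 i
    split_ifs with h
    · rw [tsum_eq_single 0 fun j hj ↦ by simp [h, hj]]
      simp [h]
    · rw [tsum_eq_zero_add']
      · simp [h]
      simp_rw [pow_mul, pow_add]
      apply Summable.mul_right
      exact WithPiTopology.summable_pow_of_constantCoeff_eq_zero (by simp)
  · ext n
    rw [coeff_mk, Nat.Partition.coeff_genFun, ped, Fintype.card_subtype, card_filter]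
    simp_rw [Finsupp.prod, prod_boole]
    push_cast
    simp

theorem pedSeries_mul_qPochhammer :
    pedSeries * qPochhammer X (X ^ 2) = qPochhammer (-X ^ 2) (X ^ 2) := by
  have hX : constantCoeff (X ^ 2 : ℤ⟦X⟧) = 0 := by simp
  have h_odd : HasProd (fun i : ℕ ↦ if Even (i + 1) then 1 else 1 - (X : ℤ⟦X⟧) ^ (i + 1))
      (qPochhammer X (X ^ 2)) := by
    rw [← mul_one (qPochhammer X (X ^ 2))]
    refine HasProd.even_mul_odd ?_ ?_
    · convert! hasProd_qPochhammer X hX using 2 with i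
      rw [if_neg (by simp), pow_succ', pow_mul]
    · simp [Nat.even_add_one]
  have h_even : HasProd (fun i : ℕ ↦ if Even (i + 1) then 1 + (X : ℤ⟦X⟧) ^ (i + 1) else 1)
      (qPochhammer (-X ^ 2) (X ^ 2)) := by
    rw [← one_mul (qPochhammer (-X ^ 2) (X ^ 2))]
    refine HasProd.even_mul_odd ?_ ?_
    · simp
    · convert! hasProd_qPochhammer (-X ^ 2) hX using 2 with i
      rw [if_pos ⟨i + 1, by ring⟩]
      ring
  refine ((hasProd_powerSeriesMk_ped ℤ).mul h_odd).unique ?_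
  convert! h_even using 2 with i
  split_ifs
  · rw [mul_one]
  · simp_rw [pow_mul]
    exact WithPiTopology.tsum_pow_mul_one_sub_of_constantCoeff_eq_zero (by simp)

theorem evalNegHom_pedSeries_mul_thetaPhi : evalNegHom pedSeries * thetaPhi = thetaPsi := by
  have hX : constantCoeff (X : ℤ⟦X⟧) = 0 := constantCoeff_X
  have h : pedSeries * evalNegHom thetaPhi = evalNegHom thetaPsi := by
    refine mul_right_cancel₀ (qPochhammer_ne_zero (x := -X) (by simp) hX) ?_
    have h_neg := qPochhammer_eq_mul (-X) hX
    rw [neg_mul, ← sq] at h_neg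
    calc pedSeries * evalNegHom thetaPhi * qPochhammer (-X) X
      _ = pedSeries * qPochhammer X X := by rw [mul_assoc, evalNegHom_thetaPhi_mul_qPochhammer]
      _ = pedSeries * qPochhammer X (X ^ 2) * qPochhammer (X ^ 2) (X ^ 2) := by
        rw [qPochhammer_eq_mul X hX, ← sq, mul_assoc]
      _ = evalNegHom thetaPsi * qPochhammer (-X) X := by
        rw [pedSeries_mul_qPochhammer, ← evalNegHom_thetaPsi_mul_qPochhammer, h_neg]
        ring
  have h_invol (f : ℤ⟦X⟧) : evalNegHom (evalNegHom f) = f := by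
    simp [evalNegHom, rescale_rescale]
  simpa only [map_mul, h_invol] using congrArg evalNegHom h

theorem coeff_evalNegHom_pedSeries (n : ℕ) :
    coeff n (evalNegHom pedSeries) = (-1) ^ n * (ped n : ℤ) := by
  rw [evalNegHom, coeff_rescale, pedSeries, coeff_mk]

end PedSeries

section Congruences

theorem exists_dissection_three_one_evalNegHom_pedSeries_eq : ∃ f g : ℤ⟦X⟧,
    dissection 3 1 (evalNegHom pedSeries) = 4 * (thetaPsi * expand 2 two_ne_zero thetaPsi) +
      8 * f + expand 3 three_ne_zero g := by
  set p := evalNegHom pedSeries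
  set S := countSeries fun s : ℕ ↦ (s + 1) ^ 2
  set T := thetaPsi * expand 2 two_ne_zero thetaPsi
  have h : p = thetaPsi * thetaPhi ^ 2 - 3 • (thetaPsi * thetaPhi) + 3 • thetaPsi -
      8 • (p * S ^ 3) := by
    simp only [nsmul_eq_mul, ← evalNegHom_pedSeries_mul_thetaPhi, thetaPhi_eq]
    ring
  refine ⟨expand 3 three_ne_zero thetaPhi * T - 2 * T - dissection 3 1 (p * S ^ 3),
    3 * (thetaPsi * thetaPhi + thetaPsi - thetaPhi ^ 2 * thetaPsi), ?_⟩
  have h' := congrArg (dissection 3 1) h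
  rw [map_sub, map_add, map_sub, map_nsmul, map_nsmul, map_nsmul, dissection_three_one_thetaPsi,
    dissection_three_one_thetaPsi_mul_thetaPhi, dissection_three_one_thetaPsi_mul_thetaPhi_sq] at h'
  rw [h', map_mul (expand 3 three_ne_zero) 3, map_ofNat,
    map_sub, map_add, map_mul (expand 3 three_ne_zero) (thetaPhi ^ 2)]
  ring

theorem ped_modEq_eight (n : ℕ) : ped (9 * n + 7) ≡ (reps (24 * n + 19)).ncard [MOD 8] := by
  obtain ⟨f, g, h⟩ := exists_dissection_three_one_evalNegHom_pedSeries_eq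
  have h_coeff := congrArg (coeff (3 * n + 2)) h
  have h_reps := four_mul_coeff_thetaPsi_mul_expand_thetaPsi (3 * n + 2)
  rw [← map_ofNat (C (R := ℤ)) 4, ← map_ofNat (C (R := ℤ)) 8, map_add, map_add, coeff_C_mul,
    coeff_C_mul, coeff_expand_of_not_dvd _ _ _ (by lia), coeff_dissection,
    coeff_evalNegHom_pedSeries] at h_coeff
  rw [show 3 * (3 * n + 2) + 1 = 9 * n + 7 by ring] at h_coeff
  rw [show 8 * (3 * n + 2) + 3 = 24 * n + 19 by ring] at h_reps
  rw [← Int.natCast_modEq_iff, Int.modEq_iff_dvd, ← h_reps]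
  rcases neg_one_pow_eq_or ℤ (9 * n + 7) with h_sign | h_sign <;> rw [h_sign] at h_coeff <;> lia

theorem map_dissection_three_one_evalNegHom_pedSeries :
    PowerSeries.map (Int.castRingHom (ZMod 3)) (dissection 3 1 (evalNegHom pedSeries)) =
      PowerSeries.map (Int.castRingHom (ZMod 3))
        (8 * (thetaPhi * expand 3 three_ne_zero thetaPsi)) := by
  let π := PowerSeries.map (Int.castRingHom (ZMod 3))
  have h_ped := congrArg π evalNegHom_pedSeries_mul_thetaPhi
  have h_psi := congrArg π thetaPhi_mul_expand_thetaPsi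
  have h_dissection := congrArg π dissection_three_one_thetaPsi_mul_thetaPhi_sq
  have h_three : (3 : (ZMod 3)⟦X⟧) = 0 := by
    rw [← map_ofNat (C (R := ZMod 3)) 3]
    exact (congrArg C (by decide)).trans (map_zero C)
  simp only [π, map_dissection, map_mul, map_pow, map_sub, map_expand, map_ofNat, h_three,
    zero_mul, sub_zero, ← pow_eq_expand 3] at h_ped h_psi h_dissection ⊢
  set φ := PowerSeries.map (Int.castRingHom (ZMod 3)) thetaPhi
  set ψ := PowerSeries.map (Int.castRingHom (ZMod 3)) thetaPsi
  set P := PowerSeries.map (Int.castRingHom (ZMod 3)) (evalNegHom pedSeries)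
  have hφ : φ ≠ 0 := map_thetaPhi_ne_zero
  refine mul_left_cancel₀ hφ ?_
  calc φ * dissection 3 1 P
    _ = dissection 3 1 (expand 3 three_ne_zero φ * P) :=
      (dissection_expand_mul three_ne_zero (by simp) φ P).symm
    _ = dissection 3 1 (ψ * φ ^ 2) := by
      rw [← pow_eq_expand, ← h_ped]
      congr 1
      ring
    _ = 8 * φ ^ 2 * ψ * (φ * expand 2 two_ne_zero ψ) := by
      rw [h_dissection]
      ring
    _ = φ * (8 * (φ * ψ ^ 3)) := by
      rw [h_psi]
      ring

theorem three_dvd_ped (n : ℕ) : 3 ∣ ped (9 * n + 7) := by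
  have h := congrArg (coeff n <| dissection 3 2 ·) map_dissection_three_one_evalNegHom_pedSeries
  have h' : 8 * (thetaPhi * expand 3 three_ne_zero thetaPsi) =
      expand 3 three_ne_zero (8 * thetaPsi) * thetaPhi := by
    rw [map_mul (expand 3 three_ne_zero), map_ofNat]
    ring
  simp only [← map_dissection] at h
  rw [h', dissection_expand_mul three_ne_zero (by simp), dissection_three_two_thetaPhi, mul_zero,
    map_zero, map_zero, coeff_map, coeff_dissection, coeff_dissection,
    coeff_evalNegHom_pedSeries] at h
  rw [show 3 * (3 * n + 2) + 1 = 9 * n + 7 by ring] at h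
  rw [← CharP.cast_eq_zero_iff (ZMod 3) 3]
  simpa using h

end Congruences

theorem sq_mod_twentyFour {m : ℕ} (hm : m.Coprime 24) : m ^ 2 % 24 = 1 := by
  have h : ∀ r < 24, r.Coprime 24 → r ^ 2 % 24 = 1 := by decide
  rw [Nat.pow_mod]
  exact h _ (Nat.mod_lt m (by simp)) ((Nat.mod_modEq m 24).gcd_eq.trans hm)

theorem ped_iterated_congruence_general {m : ℕ}
    (hm : ∀ p, p.Prime → p ∣ m → p % 8 = 5 ∨ p % 8 = 7) (n : ℕ) :
    ped (9 * n + 7) ≡ ped (9 * m ^ 2 * n + (57 * m ^ 2 - 1) / 8) [MOD 24] := by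
  have h_coprime : m.Coprime 24 := Nat.coprime_of_dvd fun p hp hpm hp24 ↦ by
    have : p ≤ 24 := Nat.le_of_dvd (by simp) hp24
    have := hm p hp hpm
    interval_cases p <;> lia
  obtain ⟨t, ht⟩ : ∃ t, m ^ 2 = 24 * t + 1 :=
    ⟨m ^ 2 / 24, by rw [← sq_mod_twentyFour h_coprime, Nat.div_add_mod]⟩
  have h_arg : 9 * m ^ 2 * n + (57 * m ^ 2 - 1) / 8 = 9 * (m ^ 2 * n + 19 * t) + 7 := by
    lia
  have h_reps : m ^ 2 * (24 * n + 19) = 24 * (m ^ 2 * n + 19 * t) + 19 := by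
    lia
  rw [h_arg]
  refine (Nat.modEq_and_modEq_iff_modEq_mul (by decide : Nat.Coprime 8 3)).1 ⟨?_, ?_⟩
  · calc ped (9 * n + 7)
      _ ≡ (reps (24 * n + 19)).ncard [MOD 8] := ped_modEq_eight n
      _ = (reps (24 * (m ^ 2 * n + 19 * t) + 19)).ncard := by
        rw [← h_reps, ncard_reps_sq_mul_of_mod_eight hm]
      _ ≡ ped (9 * (m ^ 2 * n + 19 * t) + 7) [MOD 8] := (ped_modEq_eight _).symm
  · exact (Nat.modEq_zero_iff_dvd.2 (three_dvd_ped _)).trans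
      (Nat.modEq_zero_iff_dvd.2 (three_dvd_ped _)).symm

theorem ped_iterated_congruence (k n : ℕ) (hk : 1 ≤ k) :
    ped (9 * n + 7) ≡
      ped (9 * 5 ^ (2 * k) * n + (57 * 5 ^ (2 * k) - 1) / 8) [MOD 24] := by
  rw [pow_mul' 5]
  refine ped_iterated_congruence_general (fun p hp hpk ↦ ?_) n
  rw [(Nat.prime_dvd_prime_iff_eq hp Nat.prime_five).1 (hp.dvd_of_dvd_pow hpk)]
  exact Or.inl rfl
end

section
/- For every nonnegative integer n, ped(9n + 7) ≡ ped(225n + 178) (mod 24). -/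
/-!
Write `Q(q) = ∑ ped n * (-q) ^ n`, `φ(q) = ∑ q ^ (k ^ 2)` and `ψ(q) = ∑ q ^ (2 * k ^ 2 + k)`, with
`k` running over `ℤ`. Gauss's product for `ψ` turns Euler's product for `Q` into
`Q(q) * ψ(q) = ψ(q ^ 2)`, and `ψ(q) ^ 2 = φ(q) * ψ(q ^ 2)` then gives `Q * φ = ψ`.

Modulo `3` the series `φ ^ 3` is `φ(q ^ 3)`, and modulo `8` the inverse of `φ` is
`3 - 3 * φ + φ ^ 2` because `φ - 1` is even. Either way the terms `q ^ (3 * n + 1)` of `Q` are read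
off from those of `ψ * φ` and `ψ * φ ^ 2`, which come from multiplication by `1 ± √-2` on the norm
form `x ^ 2 + 2 * y ^ 2`. The result is that `ped (9 * n + 7)` is congruent modulo `24` to `12`
times the coefficient of `q ^ (3 * n + 2)` in `ψ(q) * ψ(q ^ 2)`.

Finally `-2` is not a square modulo `5`, so `x ^ 2 + 2 * y ^ 2` is divisible by `5` only if both
`x` and `y` are; hence the coefficient of `q ^ (25 * n + 9)` in `ψ(q) * ψ(q ^ 2)` equals that of
`q ^ n`.
-/

open PowerSeries Finset

/-! ### Multisections and congruences of power series -/

theorem map_ofNat_mul {A B F : Type*} [NonAssocSemiring A] [NonAssocSemiring B] [FunLike F A B]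
    [AddMonoidHomClass F A B] (f : F) (c : ℕ) [c.AtLeastTwo] (a : A) :
    f (ofNat(c) * a) = ofNat(c) * f a := by
  rw [← Nat.cast_ofNat, ← nsmul_eq_mul, map_nsmul, nsmul_eq_mul, Nat.cast_ofNat]

section Multisection

variable {R : Type*} [CommSemiring R]

/-- The `r`-th component of the `m`-section of a power series: `∑ aₖ X ^ k ↦ ∑ aₘₙ₊ᵣ X ^ n`. -/
noncomputable def multisection (m r : ℕ) : R⟦X⟧ →ₗ[R] R⟦X⟧ where
  toFun f := PowerSeries.mk fun n => coeff (m * n + r) f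
  map_add' _ _ := by ext; simp only [coeff_mk, map_add]
  map_smul' _ _ := by ext; simp only [coeff_mk, map_smul, RingHom.id_apply]

@[simp]
theorem coeff_multisection (m r n : ℕ) (f : R⟦X⟧) :
    coeff n (multisection m r f) = coeff (m * n + r) f := by
  simp only [multisection, LinearMap.coe_mk, AddHom.coe_mk, coeff_mk]

theorem multisection_X_pow_mul {m r s : ℕ} (hr : r < s) (hs : s ≤ m + r) (f : R⟦X⟧) :
    multisection m r (X ^ s * f) = X * multisection m (m + r - s) f := by
  ext (_ | n)
  · rw [coeff_multisection, coeff_zero_X_mul, coeff_X_pow_mul', if_neg (by omega)]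
  · rw [coeff_multisection, coeff_succ_X_mul, coeff_multisection,
      show m * (n + 1) + r = m * n + (m + r - s) + s by rw [mul_add_one]; omega, coeff_X_pow_mul]

variable {S : Type*} [CommRing S]

theorem multisection_expand_mul {m r : ℕ} (hm : m ≠ 0) (hr : r < m) (f g : S⟦X⟧) :
    multisection m r (expand m hm f * g) = f * multisection m r g := by
  ext n
  rw [coeff_multisection, coeff_mul, coeff_mul]
  symm
  refine sum_of_injOn (fun a => (m * a.1, m * a.2 + r)) ?_ ?_ ?_ ?_
  · rintro ⟨a, b⟩ _ ⟨c, d⟩ _ h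
    simp only [Prod.mk.injEq, add_left_inj, mul_right_inj' hm] at h
    exact Prod.ext h.1 h.2
  · rintro ⟨a, b⟩ h
    simp only [mem_coe, HasAntidiagonal.mem_antidiagonal] at h ⊢
    rw [← h]
    ring
  · rintro ⟨a, b⟩ hab hnot
    rw [coeff_expand_of_not_dvd, zero_mul]
    rintro ⟨c, rfl⟩
    rw [HasAntidiagonal.mem_antidiagonal] at hab
    have hb : b % m = r := by
      simpa [Nat.mod_eq_of_lt hr] using congrArg (· % m) hab
    refine hnot ⟨(c, b / m), ?_, ?_⟩
    · rw [← Nat.div_add_mod b m, hb, ← add_assoc, ← mul_add, Nat.add_right_cancel_iff]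
        at hab
      simpa only [mem_coe, HasAntidiagonal.mem_antidiagonal] using
        Nat.eq_of_mul_eq_mul_left (by omega) hab
    · simp only [Prod.mk.injEq, true_and]
      rw [← hb, Nat.div_add_mod]
  · rintro ⟨a, b⟩ _
    rw [coeff_expand_mul, coeff_multisection]

theorem multisection_expand_of_not_dvd {m r : ℕ} (hm : m ≠ 0) (hr : ¬ m ∣ r) (f : S⟦X⟧) :
    multisection m r (expand m hm f) = 0 := by
  ext n
  rw [coeff_multisection, map_zero, coeff_expand_of_not_dvd]
  rwa [← Nat.dvd_add_iff_right (dvd_mul_right m n)]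

theorem sum_X_pow_mul_expand_multisection {m : ℕ} (hm : m ≠ 0) (f : S⟦X⟧) :
    ∑ r ∈ range m, X ^ r * expand m hm (multisection m r f) = f := by
  ext n
  have hn : n % m ∈ range m := mem_range.mpr (Nat.mod_lt n (Nat.pos_of_ne_zero hm))
  rw [map_sum, sum_eq_single_of_mem _ hn fun r hr hne => ?_]
  · rw [coeff_X_pow_mul', if_pos (Nat.mod_le n m), coeff_expand, if_pos (Nat.dvd_sub_mod n),
      coeff_multisection, Nat.mul_div_cancel' (Nat.dvd_sub_mod n),
      Nat.sub_add_cancel (Nat.mod_le n m)]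
  · rw [coeff_X_pow_mul']
    split_ifs with hrn
    · refine coeff_expand_of_not_dvd _ _ _ fun hdvd => hne ?_
      rw [(Nat.modEq_iff_dvd' hrn).mpr hdvd |>.symm, Nat.mod_eq_of_lt (mem_range.mp hr)]
    · rfl

end Multisection

theorem natCast_dvd_of_map_eq_zero {p : ℕ} {f : ℤ⟦X⟧}
    (hf : PowerSeries.map (Int.castRingHom (ZMod p)) f = 0) : (p : ℤ⟦X⟧) ∣ f := by
  have hcoeff (n : ℕ) : (p : ℤ) ∣ coeff n f := by
    rw [← ZMod.intCast_zmod_eq_zero_iff_dvd, ← eq_intCast (Int.castRingHom (ZMod p)), ← coeff_map,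
      hf, map_zero]
  choose c hc using hcoeff
  refine ⟨PowerSeries.mk c, ?_⟩
  ext n
  rw [← nsmul_eq_mul, map_nsmul, coeff_mk, hc, nsmul_eq_mul]

theorem prime_dvd_pow_sub_expand {p : ℕ} (hp : p.Prime) (f : ℤ⟦X⟧) :
    (p : ℤ⟦X⟧) ∣ f ^ p - expand p hp.ne_zero f := by
  have : Fact p.Prime := ⟨hp⟩
  apply natCast_dvd_of_map_eq_zero
  have hfrob := MvPowerSeries.map_frobenius_expand p hp.ne_zero
    (f := PowerSeries.map (Int.castRingHom (ZMod p)) f)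
  rw [ZMod.frobenius_zmod, MvPowerSeries.map_id] at hfrob
  rw [map_sub, map_pow, map_expand, sub_eq_zero]
  exact hfrob.symm

/-! ### Generating functions of size functions -/

section SizeGenFun

variable {ι κ : Type*}

/-- The generating function of a size function `f`: the `n`-th coefficient counts the indices `i`
with `f i = n`. Sizes are integers so that quadratic forms over `ℤ` can be used directly, and an
infinite fiber is counted as `0`. -/
noncomputable def sizeGenFun (f : ι → ℤ) : ℤ⟦X⟧ :=
  PowerSeries.mk fun n => ({i | f i = (n : ℤ)}.ncard : ℤ)

theorem coeff_sizeGenFun (f : ι → ℤ) (n : ℕ) :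
    coeff n (sizeGenFun f) = ({i | f i = (n : ℤ)}.ncard : ℤ) :=
  coeff_mk _ _

/-- A nonnegative function taking every value finitely often, so that `sizeGenFun f` is the honest
generating function `∑ q ^ f i`. -/
structure IsSizeFunction (f : ι → ℤ) : Prop where
  nonneg (i : ι) : 0 ≤ f i
  finite_fiber (n : ℤ) : {i | f i = n}.Finite

theorem IsSizeFunction.const_mul {f : ι → ℤ} (hf : IsSizeFunction f) {m : ℕ} (hm : m ≠ 0) :
    IsSizeFunction fun i => m * f i where
  nonneg i := mul_nonneg m.cast_nonneg (hf.nonneg i)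
  finite_fiber n := (hf.finite_fiber (n / m)).subset fun i (hi : m * f i = n) => by
    rw [Set.mem_ofPred_eq, ← hi, Int.mul_ediv_cancel_left _ (Nat.cast_ne_zero.mpr hm)]

theorem IsSizeFunction.finite_preimage_Icc {f : ι → ℤ} (hf : IsSizeFunction f) (a b : ℤ) :
    (f ⁻¹' Set.Icc a b).Finite :=
  (Set.finite_Icc a b).preimage' fun n _ => hf.finite_fiber n

theorem IsSizeFunction.add {f : ι → ℤ} {g : κ → ℤ} (hf : IsSizeFunction f)
    (hg : IsSizeFunction g) : IsSizeFunction fun p : ι × κ => f p.1 + g p.2 where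
  nonneg p := add_nonneg (hf.nonneg p.1) (hg.nonneg p.2)
  finite_fiber n := by
    refine ((hf.finite_preimage_Icc 0 n).prod (hg.finite_preimage_Icc 0 n)).subset ?_
    rintro ⟨i, j⟩ (hij : f i + g j = n)
    have hi := hf.nonneg i
    have hj := hg.nonneg j
    exact ⟨⟨hi, by linarith⟩, ⟨hj, by linarith⟩⟩

theorem isSizeFunction_of_abs_le {f : ℤ → ℤ} (h : ∀ k, |k| ≤ f k) : IsSizeFunction f where
  nonneg k := (abs_nonneg k).trans (h k)
  finite_fiber n := (Set.finite_Icc (-n) n).subset fun k hk => abs_le.mp (hk ▸ h k)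

theorem sizeGenFun_mul {f : ι → ℤ} {g : κ → ℤ} (hf : IsSizeFunction f) (hg : IsSizeFunction g) :
    sizeGenFun f * sizeGenFun g = sizeGenFun fun p : ι × κ => f p.1 + g p.2 := by
  classical
  ext n
  have hfiber : {p : ι × κ | f p.1 + g p.2 = (n : ℤ)} =
      ↑((HasAntidiagonal.antidiagonal n).biUnion fun a =>
        (hf.finite_fiber a.1).toFinset ×ˢ (hg.finite_fiber a.2).toFinset) := by
    ext ⟨i, j⟩
    have hi := hf.nonneg i
    have hj := hg.nonneg j
    simp only [Set.mem_ofPred_eq, mem_coe, mem_biUnion, HasAntidiagonal.mem_antidiagonal,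
      mem_product, Set.Finite.mem_toFinset, Prod.exists]
    constructor
    · exact fun h => ⟨(f i).toNat, (g j).toNat, by omega, by omega, by omega⟩
    · rintro ⟨a, b, h, ha, hb⟩
      omega
  simp only [coeff_mul, coeff_sizeGenFun]
  rw [hfiber, Set.ncard_coe_finset, card_biUnion]
  · push_cast
    refine sum_congr rfl fun a _ => ?_
    rw [card_product, Set.ncard_eq_toFinset_card _ (hf.finite_fiber a.1),
      Set.ncard_eq_toFinset_card _ (hg.finite_fiber a.2), Nat.cast_mul]
  · rintro ⟨a, b⟩ _ ⟨c, d⟩ _ hne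
    rw [Function.onFun, disjoint_left]
    rintro ⟨i, j⟩ hab hcd
    simp only [mem_product, Set.Finite.mem_toFinset, Set.mem_ofPred_eq] at hab hcd
    exact hne (by ext <;> simp only <;> omega)

theorem sizeGenFun_comp {e : κ → ι} (he : e.Bijective) (f : ι → ℤ) :
    sizeGenFun (f ∘ e) = sizeGenFun f := by
  ext n
  rw [coeff_sizeGenFun, coeff_sizeGenFun, ← Set.ncard_preimage_of_injective_subset_range
    he.injective (he.surjective.range_eq ▸ Set.subset_univ {i | f i = (n : ℤ)})]
  rfl

theorem expand_sizeGenFun (f : ι → ℤ) {m : ℕ} (hm : m ≠ 0) :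
    expand m hm (sizeGenFun f) = sizeGenFun fun i => m * f i := by
  ext n
  rw [coeff_expand]
  split_ifs with hn
  · obtain ⟨k, rfl⟩ := hn
    rw [Nat.mul_div_cancel_left _ (Nat.pos_of_ne_zero hm), coeff_sizeGenFun,
      coeff_sizeGenFun]
    congr 2
    ext i
    rw [Set.mem_ofPred_eq, Set.mem_ofPred_eq, Nat.cast_mul,
      mul_right_inj' (Nat.cast_ne_zero.mpr hm)]
  · have hempty : {i | (m : ℤ) * f i = n} = ∅ := Set.eq_empty_of_forall_notMem fun i hi =>
      hn (Int.natCast_dvd_natCast.mp ⟨_, hi.symm⟩)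
    rw [coeff_sizeGenFun, hempty, Set.ncard_empty, Nat.cast_zero]

theorem sizeGenFun_sumElim {f : ι → ℤ} {g : κ → ℤ} (hf : IsSizeFunction f)
    (hg : IsSizeFunction g) : sizeGenFun (Sum.elim f g) = sizeGenFun f + sizeGenFun g := by
  ext n
  have hfiber : {i | Sum.elim f g i = (n : ℤ)} =
      Sum.inl '' {i | f i = (n : ℤ)} ∪ Sum.inr '' {i | g i = (n : ℤ)} := by
    ext (i | i) <;> simp
  rw [map_add, coeff_sizeGenFun, coeff_sizeGenFun, coeff_sizeGenFun, hfiber,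
    Set.ncard_union_eq Set.disjoint_image_inl_image_inr ((hf.finite_fiber n).image _)
      ((hg.finite_fiber n).image _), Set.ncard_image_of_injective _ Sum.inl_injective,
    Set.ncard_image_of_injective _ Sum.inr_injective, Nat.cast_add]

theorem ncard_fiber_inter_range {e : κ → ι} (he : e.Injective) {f : ι → ℤ} {g : κ → ℤ} {m : ℕ}
    (hm : m ≠ 0) {r : ℕ} (hfe : ∀ k, f (e k) = m * g k + r) (n : ℕ) :
    (({i | f i = ((m * n + r : ℕ) : ℤ)} ∩ Set.range e).ncard : ℤ) = coeff n (sizeGenFun g) := by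
  rw [coeff_sizeGenFun, ← Set.ncard_preimage_of_injective_subset_range he Set.inter_subset_right,
    Set.preimage_inter, Set.preimage_range, Set.inter_univ]
  congr 2
  ext k
  rw [Set.mem_preimage, Set.mem_ofPred_eq, Set.mem_ofPred_eq, hfe]
  push_cast
  rw [add_left_inj, mul_right_inj' (Nat.cast_ne_zero.mpr hm)]

theorem fiber_subset_of_modEq {f : ι → ℤ} {m r : ℕ} {s : Set ι}
    (hs : ∀ i, f i ≡ r [ZMOD m] → i ∈ s) (n : ℕ) : {i | f i = ((m * n + r : ℕ) : ℤ)} ⊆ s := by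
  intro i hi
  refine hs i ?_
  rw [hi]
  push_cast
  rw [Int.modulus_mul_add_modEq_iff]

theorem multisection_sizeGenFun {f : ι → ℤ} {g : κ → ℤ} {e : κ → ι} (he : e.Injective) {m : ℕ}
    (hm : m ≠ 0) {r : ℕ} (hfe : ∀ k, f (e k) = m * g k + r)
    (hrange : ∀ i, f i ≡ r [ZMOD m] → i ∈ Set.range e) :
    multisection m r (sizeGenFun f) = sizeGenFun g := by
  ext n
  rw [coeff_multisection, coeff_sizeGenFun, ← ncard_fiber_inter_range he hm hfe,
    Set.inter_eq_left.mpr (fiber_subset_of_modEq hrange n)]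

theorem multisection_sizeGenFun_eq_zero {f : ι → ℤ} {m r : ℕ} (hf : ∀ i, ¬ f i ≡ r [ZMOD m]) :
    multisection m r (sizeGenFun f) = 0 := by
  ext n
  rw [coeff_multisection, coeff_sizeGenFun,
    Set.subset_empty_iff.mp (fiber_subset_of_modEq (s := ∅) (fun i hi => hf i hi) n),
    Set.ncard_empty, Nat.cast_zero, map_zero]

theorem multisection_sizeGenFun_inclusion_exclusion {κ₀ κ₁ κ₂ : Type*} {f : ι → ℤ}
    (hf : IsSizeFunction f) {g₀ : κ₀ → ℤ} {g₁ : κ₁ → ℤ} {g₂ : κ₂ → ℤ} {e₀ : κ₀ → ι} {e₁ : κ₁ → ι}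
    {e₂ : κ₂ → ι} (he₀ : e₀.Injective) (he₁ : e₁.Injective) (he₂ : e₂.Injective) {m : ℕ}
    (hm : m ≠ 0) {r : ℕ} (h₀ : ∀ k, f (e₀ k) = m * g₀ k + r) (h₁ : ∀ k, f (e₁ k) = m * g₁ k + r)
    (h₂ : ∀ k, f (e₂ k) = m * g₂ k + r) (hinter : Set.range e₁ ∩ Set.range e₂ = Set.range e₀)
    (hunion : ∀ i, f i ≡ r [ZMOD m] → i ∈ Set.range e₁ ∪ Set.range e₂) :
    multisection m r (sizeGenFun f) + sizeGenFun g₀ = sizeGenFun g₁ + sizeGenFun g₂ := by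
  ext n
  set s := {i | f i = ((m * n + r : ℕ) : ℤ)}
  have hfin : s.Finite := hf.finite_fiber _
  have hcover : s ∩ Set.range e₁ ∪ s ∩ Set.range e₂ = s := by
    rw [← Set.inter_union_distrib_left, Set.inter_eq_left]
    exact fiber_subset_of_modEq hunion n
  have hcard := Set.ncard_union_add_ncard_inter (s ∩ Set.range e₁) (s ∩ Set.range e₂)
    (hfin.inter_of_left _) (hfin.inter_of_left _)
  rw [hcover, ← Set.inter_inter_distrib_left, hinter] at hcard
  rw [map_add, map_add, coeff_multisection, coeff_sizeGenFun, ← ncard_fiber_inter_range he₀ hm h₀,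
    ← ncard_fiber_inter_range he₁ hm h₁, ← ncard_fiber_inter_range he₂ hm h₂]
  exact_mod_cast hcard

end SizeGenFun

/-! ### Theta series -/

/-- Ramanujan's theta function `φ(q) = ∑ q ^ (k ^ 2)`, summed over all integers `k`. -/
noncomputable def squareTheta : ℤ⟦X⟧ := sizeGenFun fun k : ℤ => k ^ 2

/-- Ramanujan's theta function `ψ(q) = ∑ q ^ (2 * k ^ 2 + k)`, summed over all integers `k`; the
exponents are the triangular numbers, each occurring once. -/
noncomputable def triangularTheta : ℤ⟦X⟧ := sizeGenFun fun k : ℤ => 2 * k ^ 2 + k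

theorem isSizeFunction_sq : IsSizeFunction fun k : ℤ => k ^ 2 :=
  isSizeFunction_of_abs_le fun k => by
    rcases lt_trichotomy k 0 with hk | hk | hk <;> rw [abs_le] <;> constructor <;> nlinarith

theorem isSizeFunction_two_mul_sq_add_self : IsSizeFunction fun k : ℤ => 2 * k ^ 2 + k :=
  isSizeFunction_of_abs_le fun k => by
    rcases lt_trichotomy k 0 with hk | hk | hk <;> rw [abs_le] <;> constructor <;> nlinarith

theorem isSizeFunction_two_mul_two_mul_sq_add_self :
    IsSizeFunction fun k : ℤ => 2 * (2 * k ^ 2 + k) :=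
  isSizeFunction_two_mul_sq_add_self.const_mul two_ne_zero

/-- The exponents in the double series `ψ(q) φ(q)`. -/
def triangularSquareForm (p : ℤ × ℤ) : ℤ := (2 * p.1 ^ 2 + p.1) + p.2 ^ 2

/-- The exponents in the double series `ψ(q) ψ(q ^ 2)`. -/
def triangularForm (p : ℤ × ℤ) : ℤ := (2 * p.1 ^ 2 + p.1) + 2 * (2 * p.2 ^ 2 + p.2)

theorem isSizeFunction_triangularSquareForm : IsSizeFunction triangularSquareForm :=
  isSizeFunction_two_mul_sq_add_self.add isSizeFunction_sq

theorem isSizeFunction_triangularForm : IsSizeFunction triangularForm :=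
  isSizeFunction_two_mul_sq_add_self.add isSizeFunction_two_mul_two_mul_sq_add_self

theorem triangularTheta_mul_squareTheta :
    triangularTheta * squareTheta = sizeGenFun triangularSquareForm :=
  sizeGenFun_mul isSizeFunction_two_mul_sq_add_self isSizeFunction_sq

theorem triangularTheta_mul_expand_two :
    triangularTheta * expand 2 two_ne_zero triangularTheta = sizeGenFun triangularForm := by
  rw [triangularTheta, expand_sizeGenFun]
  exact sizeGenFun_mul isSizeFunction_two_mul_sq_add_self
    isSizeFunction_two_mul_two_mul_sq_add_self

theorem triangularTheta_sq :
    triangularTheta ^ 2 = squareTheta * expand 2 two_ne_zero triangularTheta := by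
  -- With `s = j + k` the exponent in `ψ(q) ^ 2` is `(j - k) ^ 2 + s * (s + 1)`, where
  -- `s * (s + 1)` is `2 * (2 * m ^ 2 + m)` for `s = 2 * m` and for `s = -2 * m - 1`.
  let e (p : ℤ × ℤ) : ℤ × ℤ :=
    (p.1 - p.2, if Even (p.1 + p.2) then (p.1 + p.2) / 2 else -((p.1 + p.2 + 1) / 2))
  have he : e.Bijective := by
    constructor
    · rintro ⟨j, k⟩ ⟨j', k'⟩ h
      simp only [e, Prod.mk.injEq, Int.even_iff] at h ⊢
      split_ifs at h <;> omega
    · rintro ⟨d, m⟩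
      refine ⟨if Even d then (m + d / 2, m - d / 2) else ((d - 1) / 2 - m, -((d + 1) / 2) - m), ?_⟩
      simp only [e, Int.even_iff]
      split_ifs <;> simp only [Prod.mk.injEq] <;> omega
  rw [sq, squareTheta, triangularTheta, expand_sizeGenFun,
    sizeGenFun_mul isSizeFunction_two_mul_sq_add_self isSizeFunction_two_mul_sq_add_self]
  refine Eq.trans ?_ (sizeGenFun_mul isSizeFunction_sq
    isSizeFunction_two_mul_two_mul_sq_add_self).symm
  refine Eq.trans ?_ (sizeGenFun_comp he _)
  congr 1
  ext ⟨j, k⟩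
  simp only [e, Function.comp_apply]
  split_ifs with hs
  · obtain ⟨m, hm⟩ := hs
    obtain rfl : k = m + m - j := by linarith
    rw [show (j + (m + m - j)) / 2 = m by omega]
    ring
  · obtain ⟨m, hm⟩ := Int.not_even_iff_odd.mp hs
    obtain rfl : k = 2 * m + 1 - j := by linarith
    rw [show (j + (2 * m + 1 - j) + 1) / 2 = m + 1 by omega]
    ring

theorem constantCoeff_triangularTheta : constantCoeff triangularTheta = 1 := by
  have hfiber : {k : ℤ | 2 * k ^ 2 + k = ((0 : ℕ) : ℤ)} = {0} := by
    ext k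
    simp only [Set.mem_ofPred_eq, Set.mem_singleton_iff, Nat.cast_zero]
    constructor
    · intro h
      have hfactor : k * (2 * k + 1) = 0 := by linear_combination h
      rcases mul_eq_zero.mp hfactor with hk | hk <;> omega
    · rintro rfl
      norm_num
  rw [← coeff_zero_eq_constantCoeff_apply, triangularTheta, coeff_sizeGenFun, hfiber,
    Set.ncard_singleton, Nat.cast_one]

theorem multisection_three_one_triangularTheta :
    multisection 3 1 triangularTheta = expand 3 three_ne_zero triangularTheta := by
  rw [triangularTheta, expand_sizeGenFun]
  refine multisection_sizeGenFun (e := fun k => -3 * k - 1) ?_ three_ne_zero ?_ ?_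
  · intro j k h
    simp only at h
    omega
  · intro k
    push_cast
    ring
  · intro k hk
    have hres : ∀ x : ZMod 3, 2 * x ^ 2 + x = 1 → x = 2 := by decide
    have := hres k (by exact_mod_cast (ZMod.intCast_eq_intCast_iff _ _ 3).mpr hk)
    have hk : k ≡ 2 [ZMOD 3] := (ZMod.intCast_eq_intCast_iff _ _ 3).mp (by exact_mod_cast this)
    exact ⟨-((k + 1) / 3), by simp only [Int.ModEq] at hk ⊢; omega⟩

theorem multisection_three_two_triangularTheta : multisection 3 2 triangularTheta = 0 :=
  multisection_sizeGenFun_eq_zero fun k hk => by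
    have hres : ∀ x : ZMod 3, 2 * x ^ 2 + x ≠ 2 := by decide
    exact hres k (by exact_mod_cast (ZMod.intCast_eq_intCast_iff _ _ 3).mpr hk)

theorem multisection_three_two_squareTheta : multisection 3 2 squareTheta = 0 :=
  multisection_sizeGenFun_eq_zero fun k hk => by
    have hres : ∀ x : ZMod 3, x ^ 2 ≠ 2 := by decide
    exact hres k (by exact_mod_cast (ZMod.intCast_eq_intCast_iff _ _ 3).mpr hk)

theorem multisection_three_zero_squareTheta :
    multisection 3 0 squareTheta = expand 3 three_ne_zero squareTheta := by
  rw [squareTheta, expand_sizeGenFun]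
  refine multisection_sizeGenFun (e := fun k => 3 * k) (mul_right_injective₀ three_ne_zero)
    three_ne_zero (fun k => ?_) fun k hk => ?_
  · push_cast
    ring
  · obtain ⟨c, rfl⟩ := Int.prime_three.dvd_of_dvd_pow (Int.modEq_zero_iff_dvd.mp hk)
    exact ⟨c, rfl⟩

theorem multisection_twentyFive_nine_triangularTheta_mul_expand_two :
    multisection 25 9 (triangularTheta * expand 2 two_ne_zero triangularTheta) =
      triangularTheta * expand 2 two_ne_zero triangularTheta := by
  rw [triangularTheta_mul_expand_two]
  refine multisection_sizeGenFun (e := fun p : ℤ × ℤ => (5 * p.1 + 1, 5 * p.2 + 1)) ?_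
    (by norm_num) ?_ ?_
  · rintro ⟨a, b⟩ ⟨c, d⟩ h
    simp only [Prod.mk.injEq] at h ⊢
    omega
  · intro p
    simp only [triangularForm]
    push_cast
    ring
  · rintro ⟨a, b⟩ h
    have hres : ∀ x y : ZMod 5, (2 * x ^ 2 + x) + 2 * (2 * y ^ 2 + y) = 4 → x = 1 ∧ y = 1 := by
      decide
    have hmod : (2 * a ^ 2 + a) + 2 * (2 * b ^ 2 + b) ≡ 4 [ZMOD 5] :=
      (h.of_mul_right 5 : _ ≡ 9 [ZMOD 5])
    obtain ⟨ha, hb⟩ := hres a b (by exact_mod_cast (ZMod.intCast_eq_intCast_iff _ _ 5).mpr hmod)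
    have ha : a ≡ 1 [ZMOD 5] := (ZMod.intCast_eq_intCast_iff _ _ 5).mp (by exact_mod_cast ha)
    have hb : b ≡ 1 [ZMOD 5] := (ZMod.intCast_eq_intCast_iff _ _ 5).mp (by exact_mod_cast hb)
    exact ⟨(a / 5, b / 5), by
      simp only [Int.ModEq, Prod.mk.injEq] at ha hb ⊢; omega⟩

/-- Multiplication by the two elements `1 ± √-2` of norm `3`, up to sign. Here `(u, v)` encodes
`α + β √-2` with `α = 4 * u + 1`, `β = 4 * v + 1`, of norm `8 * triangularForm (u, v) + 3`, and the
value `(j, k)` encodes `x + y √-2` with `x = 4 * j + 1`, `y = 2 * k`, of norm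
`8 * triangularSquareForm (j, k) + 1`. -/
def sqrtNegTwoMul : (ℤ × ℤ) ⊕ (ℤ × ℤ) → ℤ × ℤ :=
  Sum.elim (fun p => (-p.1 - 2 * p.2 - 1, 2 * (p.2 - p.1)))
    (fun p => (2 * p.2 - p.1, 2 * (-p.1 - p.2 - 1) + 1))

theorem sqrtNegTwoMul_injective : sqrtNegTwoMul.Injective := by
  rintro (⟨a, b⟩ | ⟨a, b⟩) (⟨c, d⟩ | ⟨c, d⟩) h <;>
    simp only [sqrtNegTwoMul, Sum.elim_inl, Sum.elim_inr, Prod.mk.injEq, Sum.inl.injEq,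
      Sum.inr.injEq, reduceCtorEq] at h ⊢ <;> omega

theorem mem_range_sqrtNegTwoMul {p : ℤ × ℤ} :
    p ∈ Set.range sqrtNegTwoMul ↔ 3 ∣ p.1 + p.2 + 1 := by
  obtain ⟨j, k⟩ := p
  constructor
  · rintro ⟨⟨u, v⟩ | ⟨u, v⟩, h⟩ <;>
      simp only [sqrtNegTwoMul, Sum.elim_inl, Sum.elim_inr, Prod.mk.injEq] at h ⊢ <;> omega
  · rintro ⟨u, hu⟩
    rcases Int.even_or_odd' k with ⟨c, hc | hc⟩
    · refine ⟨Sum.inl (-u, c - u), ?_⟩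
      simp only [sqrtNegTwoMul, Sum.elim_inl, Prod.mk.injEq] at hu ⊢
      omega
    · refine ⟨Sum.inr (-u, (j - u) / 2), ?_⟩
      simp only [sqrtNegTwoMul, Sum.elim_inr, Prod.mk.injEq] at hu ⊢
      omega

theorem triangularSquareForm_sqrtNegTwoMul (i : (ℤ × ℤ) ⊕ (ℤ × ℤ)) :
    triangularSquareForm (sqrtNegTwoMul i) =
      3 * Sum.elim triangularForm triangularForm i + 1 := by
  rcases i with ⟨u, v⟩ | ⟨u, v⟩ <;>
    simp only [sqrtNegTwoMul, triangularSquareForm, triangularForm, Sum.elim_inl, Sum.elim_inr] <;>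
    ring

theorem three_dvd_or_three_dvd_of_triangularSquareForm {p : ℤ × ℤ}
    (hp : triangularSquareForm p ≡ 1 [ZMOD 3]) : 3 ∣ p.1 + p.2 + 1 ∨ 3 ∣ p.1 - p.2 + 1 := by
  have hfactor : (p.1 + p.2 + 1) * (p.1 - p.2 + 1) =
      (1 - triangularSquareForm p) + 3 * (p.1 ^ 2 + p.1) := by
    rw [triangularSquareForm]
    ring
  rw [← Int.prime_three.dvd_mul, hfactor]
  exact hp.dvd.add (dvd_mul_right 3 _)

theorem multisection_three_one_sizeGenFun_triangularSquareForm :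
    multisection 3 1 (sizeGenFun triangularSquareForm) +
        sizeGenFun (fun p => 3 * triangularSquareForm p) =
      sizeGenFun (Sum.elim triangularForm triangularForm) +
        sizeGenFun (Sum.elim triangularForm triangularForm) := by
  -- An element of norm divisible by `3` is a multiple of `1 + √-2` or of `1 - √-2`, and of both
  -- only if it is a multiple of `3`.
  let conj (p : ℤ × ℤ) : ℤ × ℤ := (p.1, -p.2)
  have hconj : conj.Involutive := fun p => by simp only [conj, neg_neg]
  have hform (p : ℤ × ℤ) : triangularSquareForm (conj p) = triangularSquareForm p := by
    simp only [conj, triangularSquareForm, neg_sq]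
  have hrange {p : ℤ × ℤ} : p ∈ Set.range (conj ∘ sqrtNegTwoMul) ↔ 3 ∣ p.1 - p.2 + 1 := by
    rw [Set.range_comp, hconj.image_eq_preimage_symm, Set.mem_preimage, mem_range_sqrtNegTwoMul,
      sub_eq_add_neg]
  refine multisection_sizeGenFun_inclusion_exclusion isSizeFunction_triangularSquareForm
    (e₀ := fun p : ℤ × ℤ => (-3 * p.1 - 1, 3 * p.2)) (e₁ := sqrtNegTwoMul)
    (e₂ := conj ∘ sqrtNegTwoMul) ?_ sqrtNegTwoMul_injective
    (hconj.injective.comp sqrtNegTwoMul_injective) three_ne_zero ?_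
    triangularSquareForm_sqrtNegTwoMul
    (fun i => (hform _).trans (triangularSquareForm_sqrtNegTwoMul i)) ?_ ?_
  · rintro ⟨j, k⟩ ⟨j', k'⟩ h
    simp only [Prod.mk.injEq] at h ⊢
    omega
  · intro p
    simp only [triangularSquareForm]
    push_cast
    ring
  · ext ⟨j, k⟩
    rw [Set.mem_inter_iff, mem_range_sqrtNegTwoMul, hrange]
    constructor
    · rintro ⟨hadd, hsub⟩
      refine ⟨(-((j + 1) / 3), k / 3), ?_⟩
      simp only [Prod.mk.injEq] at hadd hsub ⊢
      omega
    · rintro ⟨⟨u, v⟩, h⟩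
      simp only [Prod.mk.injEq] at h ⊢
      omega
  · intro p hp
    rw [Set.mem_union, mem_range_sqrtNegTwoMul, hrange]
    exact three_dvd_or_three_dvd_of_triangularSquareForm hp

theorem multisection_three_one_triangularTheta_mul_squareTheta :
    multisection 3 1 (triangularTheta * squareTheta) +
        expand 3 three_ne_zero (triangularTheta * squareTheta) =
      4 * (triangularTheta * expand 2 two_ne_zero triangularTheta) := by
  rw [triangularTheta_mul_squareTheta, triangularTheta_mul_expand_two, expand_sizeGenFun]
  refine multisection_three_one_sizeGenFun_triangularSquareForm.trans ?_
  rw [sizeGenFun_sumElim isSizeFunction_triangularForm isSizeFunction_triangularForm]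
  ring

theorem isUnit_triangularTheta : IsUnit triangularTheta := by
  rw [isUnit_iff_constantCoeff, constantCoeff_triangularTheta]
  exact isUnit_one

theorem isUnit_expand_triangularTheta {m : ℕ} (hm : m ≠ 0) : IsUnit (expand m hm triangularTheta) :=
  isUnit_triangularTheta.map _

theorem isUnit_squareTheta : IsUnit squareTheta :=
  isUnit_of_mul_isUnit_left (triangularTheta_sq ▸ isUnit_triangularTheta.pow 2)

theorem two_dvd_squareTheta_sub_one : (2 : ℤ⟦X⟧) ∣ squareTheta - 1 := by
  rw [← (isUnit_expand_triangularTheta two_ne_zero).dvd_mul_right, sub_one_mul,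
    ← triangularTheta_sq]
  exact_mod_cast prime_dvd_pow_sub_expand Nat.prime_two triangularTheta

theorem exists_squareTheta_eq : ∃ Ω : ℤ⟦X⟧, squareTheta =
    expand 3 three_ne_zero (expand 3 three_ne_zero squareTheta) +
      X * expand 3 three_ne_zero Ω := by
  refine ⟨multisection 3 1 squareTheta, ?_⟩
  conv_lhs => rw [← sum_X_pow_mul_expand_multisection three_ne_zero squareTheta]
  rw [sum_range_succ, sum_range_succ, sum_range_one, multisection_three_zero_squareTheta,
    multisection_three_two_squareTheta, map_zero, pow_zero, pow_one, one_mul, mul_zero, add_zero]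

theorem multisection_three_one_triangularTheta_mul_squareTheta_sq :
    multisection 3 1 (triangularTheta * squareTheta ^ 2) =
      8 * (expand 3 three_ne_zero squareTheta *
        (triangularTheta * expand 2 two_ne_zero triangularTheta)) -
      3 * expand 3 three_ne_zero (triangularTheta * squareTheta ^ 2) := by
  obtain ⟨Ω, hΩ⟩ := exists_squareTheta_eq
  set φ₃ := expand 3 three_ne_zero squareTheta with hφ₃
  have hsplit : triangularTheta * squareTheta ^ 2 =
      expand 3 three_ne_zero (Ω ^ 2) * (X ^ 2 * triangularTheta) +
      2 * (expand 3 three_ne_zero φ₃ * (triangularTheta * squareTheta)) -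
      expand 3 three_ne_zero (φ₃ ^ 2) * triangularTheta := by
    rw [map_pow, map_pow]
    linear_combination triangularTheta * (squareTheta - expand 3 three_ne_zero φ₃ +
      X * expand 3 three_ne_zero Ω) * hΩ
  have hcross : multisection 3 1 (X ^ 2 * triangularTheta) = 0 := by
    rw [multisection_X_pow_mul (by norm_num) (by norm_num),
      multisection_three_two_triangularTheta, mul_zero]
  have hmain := multisection_three_one_triangularTheta_mul_squareTheta
  rw [map_mul (expand 3 _), ← hφ₃] at hmain
  conv_lhs => rw [hsplit]
  rw [map_sub, map_add, map_ofNat_mul, multisection_expand_mul _ (by norm_num),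
    multisection_expand_mul _ (by norm_num), multisection_expand_mul _ (by norm_num), hcross,
    multisection_three_one_triangularTheta, map_mul (expand 3 _), map_pow (expand 3 _), ← hφ₃]
  linear_combination 2 * φ₃ * hmain

/-! ### Gauss's product -/

section GaussProduct

variable {A : Type*} [CommRing A] {x : A} {v : ℕ → A}

/-- The terms of Shanks' finite form of Gauss's product
`∑ x ^ (i * (i + 1) / 2) = ∏ (1 - x ^ (2 * k + 2)) / (1 - x ^ (2 * k + 1))`, with `v k` standing for
the inverse of `1 - x ^ (2 * k + 1)`. -/
def shanksTerm (x : A) (v : ℕ → A) (n s : ℕ) : A :=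
  x ^ (s * (2 * n + 1)) * ∏ k ∈ Ico s n, ((1 - x ^ (2 * k + 2)) * v k)

theorem sum_shanksTerm_succ_sub (hv : ∀ k, v k * (1 - x ^ (2 * k + 1)) = 1) {n t : ℕ}
    (ht : t ≤ n) :
    ∑ s ∈ range t, (shanksTerm x v (n + 1) s - shanksTerm x v n s) =
      x ^ (t * (2 * n + 1)) * (1 - x ^ (2 * t)) * v n *
        ∏ k ∈ Ico t n, ((1 - x ^ (2 * k + 2)) * v k) := by
  induction t with
  | zero => simp
  | succ t ih =>
    rw [sum_range_succ, ih (by omega), shanksTerm, shanksTerm, prod_Ico_succ_top (by omega),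
      prod_eq_prod_Ico_succ_bot (show t < n by omega)]
    linear_combination x ^ (t * (2 * n + 1)) * (1 - x ^ (2 * t + 2)) *
      (∏ k ∈ Ico (t + 1) n, ((1 - x ^ (2 * k + 2)) * v k)) *
      (v t * hv n + x ^ (2 * n + 1) * v n * hv t)

theorem sum_shanksTerm_succ (hv : ∀ k, v k * (1 - x ^ (2 * k + 1)) = 1) (n : ℕ) :
    ∑ s ∈ range (n + 2), shanksTerm x v (n + 1) s =
      ∑ s ∈ range (n + 1), shanksTerm x v n s + x ^ ((n + 1) * (2 * n + 1)) +
        x ^ ((n + 1) * (2 * n + 3)) := by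
  have htelescope := sum_shanksTerm_succ_sub hv (le_refl n)
  rw [sum_sub_distrib, sub_eq_iff_eq_add] at htelescope
  rw [sum_range_succ, sum_range_succ, sum_range_succ, htelescope]
  simp only [shanksTerm, Ico_self, prod_empty, Nat.Ico_succ_singleton, prod_singleton]
  linear_combination x ^ (n * (2 * n + 1)) * (1 + x ^ (2 * n + 1)) * hv n

theorem choose_two_of_two_mul_add_one (n : ℕ) : (2 * n + 1).choose 2 = n * (2 * n + 1) := by
  rw [Nat.choose_two_right, Nat.add_sub_cancel]
  exact Nat.div_eq_of_eq_mul_left two_pos (by ring)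

theorem choose_two_of_two_mul_add_two (n : ℕ) :
    (2 * n + 2).choose 2 = (n + 1) * (2 * n + 1) := by
  rw [Nat.choose_two_right, show 2 * n + 2 - 1 = 2 * n + 1 by omega]
  exact Nat.div_eq_of_eq_mul_left two_pos (by ring)

theorem sum_shanksTerm (hv : ∀ k, v k * (1 - x ^ (2 * k + 1)) = 1) (n : ℕ) :
    ∑ s ∈ range (n + 1), shanksTerm x v n s = ∑ i ∈ range (2 * n + 1), x ^ (i + 1).choose 2 := by
  induction n with
  | zero => simp [shanksTerm]
  | succ n ih =>
    rw [sum_shanksTerm_succ hv, ih, show 2 * (n + 1) + 1 = 2 * n + 1 + 1 + 1 by ring,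
      sum_range_succ _ (2 * n + 1 + 1), sum_range_succ _ (2 * n + 1),
      choose_two_of_two_mul_add_two, show 2 * n + 1 + 1 + 1 = 2 * (n + 1) + 1 by ring,
      choose_two_of_two_mul_add_one, mul_add_one 2 n]

theorem triangularTheta_eq_sizeGenFun_choose :
    triangularTheta = sizeGenFun fun i : ℕ => ((i + 1).choose 2 : ℤ) := by
  rw [← sizeGenFun_comp Equiv.intEquivNat.bijective, triangularTheta]
  congr 1
  ext (k | k)
  · have hk : Equiv.intEquivNat (Int.ofNat k) = 2 * k := rfl
    rw [Function.comp_apply, hk, choose_two_of_two_mul_add_one]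
    push_cast [Int.ofNat_eq_natCast]
    ring
  · have hk : Equiv.intEquivNat (Int.negSucc k) = 2 * k + 1 := rfl
    rw [Function.comp_apply, hk, choose_two_of_two_mul_add_two, Int.negSucc_eq]
    push_cast
    ring

theorem coeff_sum_X_pow_choose {d n : ℕ} (h : d < n) :
    coeff d (∑ i ∈ range n, (X : ℤ⟦X⟧) ^ (i + 1).choose 2) = coeff d triangularTheta := by
  rw [triangularTheta_eq_sizeGenFun_choose, coeff_sizeGenFun, map_sum]
  simp only [coeff_X_pow]
  rw [sum_boole, ← Set.ncard_coe_finset]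
  congr 2
  ext i
  simp only [coe_filter, Set.mem_ofPred_eq, mem_range, Nat.cast_inj]
  refine ⟨fun hi => hi.2.symm, fun hi => ⟨?_, hi.symm⟩⟩
  rw [Nat.choose_succ_succ', Nat.choose_one_right] at hi
  omega

/-- The factors of Gauss's product `ψ(q) = ∏ (1 - q ^ (2 * k + 2)) / (1 - q ^ (2 * k + 1))`. -/
noncomputable def triangularFactor (k : ℕ) : ℤ⟦X⟧ :=
  (1 - X ^ (2 * k + 2)) * invOfUnit (1 - X ^ (2 * k + 1)) 1

theorem triangularFactor_mul (k : ℕ) :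
    triangularFactor k * (1 - X ^ (2 * k + 1)) = 1 - X ^ (2 * k + 2) := by
  rw [triangularFactor, mul_assoc, invOfUnit_mul _ _ (by simp), mul_one]

theorem coeff_prod_triangularFactor {d n : ℕ} (h : d ≤ n) :
    coeff d (∏ k ∈ range n, triangularFactor k) = coeff d triangularTheta := by
  have hsum := sum_shanksTerm (x := (X : ℤ⟦X⟧)) (v := fun k => invOfUnit (1 - X ^ (2 * k + 1)) 1)
    (fun k => invOfUnit_mul _ _ (by simp)) n
  rw [← coeff_sum_X_pow_choose (show d < 2 * n + 1 by omega), ← hsum, sum_range_succ', map_add,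
    map_sum, sum_eq_zero, zero_add]
  · simp only [shanksTerm, triangularFactor, zero_mul, pow_zero, one_mul, range_eq_Ico]
  · intro s _
    rw [shanksTerm, coeff_X_pow_mul', if_neg]
    nlinarith

open scoped PowerSeries.WithPiTopology in
theorem tendsto_prod_triangularFactor :
    Filter.Tendsto (fun n => ∏ k ∈ range n, triangularFactor k) Filter.atTop
      (nhds triangularTheta) := by
  rw [WithPiTopology.tendsto_iff_coeff_tendsto]
  exact fun d => tendsto_atTop_of_eventually_const fun n (hn : n ≥ d) =>
    coeff_prod_triangularFactor hn

end GaussProduct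

/-! ### Partitions with distinct even parts -/

/-- The signed generating function `Q(q) = ∑ ped n * (-q) ^ n`. -/
noncomputable def signedPedSeries : ℤ⟦X⟧ := PowerSeries.mk fun n => (-1) ^ n * (ped n : ℤ)

/-- The weight of `c` copies of the part `i` that makes `signedPedSeries` a generating function over
all partitions. -/
def pedWeight (i c : ℕ) : ℤ := if Even i → c ≤ 1 then (-1) ^ (c * i) else 0

theorem genFun_pedWeight : Nat.Partition.genFun pedWeight = signedPedSeries := by
  classical
  ext n
  rw [Nat.Partition.coeff_genFun, signedPedSeries, coeff_mk, ped, Fintype.card_subtype,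
    card_filter, Nat.cast_sum, mul_sum]
  refine sum_congr rfl fun p _ => ?_
  have hsum : ∑ i ∈ p.parts.toFinset, p.parts.count i * i = n := by
    conv_rhs => rw [← p.parts_sum, sum_multiset_count]
    rfl
  simp only [Finsupp.prod, Multiset.toFinsupp_support, Multiset.toFinsupp_apply]
  simp only [pedWeight]
  rw [prod_ite_zero, prod_pow_eq_pow_sum, hsum]
  simp only [Multiset.mem_toFinset]
  split_ifs <;> simp

open scoped PowerSeries.WithPiTopology in
/-- The generating function of the multiples of a single part `i`, with weights `pedWeight`. -/
noncomputable def pedFactor (i : ℕ) : ℤ⟦X⟧ :=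
  1 + ∑' j, pedWeight i (j + 1) • (X : ℤ⟦X⟧) ^ (i * (j + 1))

open scoped PowerSeries.WithPiTopology in
theorem pedFactor_of_even {i : ℕ} (hi : Even i) : pedFactor i = 1 + X ^ i := by
  rw [pedFactor, tsum_eq_single 0]
  · simp [pedWeight, hi.neg_one_pow]
  · intro j hj
    rw [pedWeight, if_neg (fun h => hj (by simpa using h hi)), zero_smul]

open scoped PowerSeries.WithPiTopology in
theorem pedFactor_mul_of_odd {i : ℕ} (hi : Odd i) : pedFactor i * (1 + X ^ i) = 1 := by
  have hzero : constantCoeff (-X ^ i : ℤ⟦X⟧) = 0 := by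
    simp [hi.pos.ne']
  have hgeom : pedFactor i = ∑' j, (-X ^ i : ℤ⟦X⟧) ^ j := by
    rw [(WithPiTopology.summable_pow_of_constantCoeff_eq_zero hzero).tsum_eq_zero_add, pow_zero,
      pedFactor]
    congr 2
    ext1 j
    rw [pedWeight, if_pos fun h => absurd h (Nat.not_even_iff_odd.mpr hi), neg_pow (X ^ i),
      mul_comm _ i, pow_mul (-1) i, hi.neg_one_pow, ← pow_mul, zsmul_eq_mul]
    push_cast
    rfl
  have hinv := WithPiTopology.tsum_pow_mul_one_sub_of_constantCoeff_eq_zero hzero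
  rwa [← hgeom, sub_neg_eq_add] at hinv

open scoped PowerSeries.WithPiTopology in
theorem tendsto_prod_pedFactor :
    Filter.Tendsto (fun n => ∏ k ∈ range n, (pedFactor (2 * k + 1) * pedFactor (2 * k + 2)))
      Filter.atTop (nhds signedPedSeries) := by
  have hpair (n : ℕ) : ∏ k ∈ range n, (pedFactor (2 * k + 1) * pedFactor (2 * k + 2)) =
      ∏ i ∈ range (2 * n), pedFactor (i + 1) := by
    induction n with
    | zero => rfl
    | succ n ih =>
      rw [prod_range_succ, ih, mul_add_one, prod_range_succ, prod_range_succ, mul_assoc]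
  have htwo : Filter.Tendsto (fun n : ℕ => 2 * n) Filter.atTop Filter.atTop :=
    Filter.tendsto_id.const_mul_atTop' two_pos
  rw [← genFun_pedWeight]
  simp only [hpair]
  exact (Nat.Partition.hasProd_genFun pedWeight).tendsto_prod_nat.comp htwo

theorem pedFactor_mul_triangularFactor (k : ℕ) :
    pedFactor (2 * k + 1) * pedFactor (2 * k + 2) * triangularFactor k =
      expand 2 two_ne_zero (triangularFactor k) := by
  have hodd := pedFactor_mul_of_odd (odd_two_mul_add_one k)
  have heven := pedFactor_of_even (show Even (2 * k + 2) from ⟨k + 1, by ring⟩)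
  have htri := triangularFactor_mul k
  have htri₂ := congrArg (expand 2 two_ne_zero) htri
  simp only [map_mul, map_sub, map_one, map_pow, expand_X] at htri₂
  have hne : (1 - (X ^ 2) ^ (2 * k + 1) : ℤ⟦X⟧) ≠ 0 := fun h => by
    simpa using congrArg constantCoeff h
  refine mul_right_cancel₀ hne ?_
  rw [htri₂, heven]
  linear_combination (1 + X ^ (2 * k + 2)) * triangularFactor k * (1 - X ^ (2 * k + 1)) * hodd +
    (1 + X ^ (2 * k + 2)) * htri

open scoped PowerSeries.WithPiTopology in
theorem signedPedSeries_mul_triangularTheta :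
    signedPedSeries * triangularTheta = expand 2 two_ne_zero triangularTheta := by
  have hexpand : Filter.Tendsto (fun n => ∏ k ∈ range n, expand 2 two_ne_zero (triangularFactor k))
      Filter.atTop (nhds (expand 2 two_ne_zero triangularTheta)) := by
    rw [WithPiTopology.tendsto_iff_coeff_tendsto]
    refine fun d => tendsto_atTop_of_eventually_const fun n (hn : n ≥ d) => ?_
    rw [← map_prod, coeff_expand, coeff_expand,
      coeff_prod_triangularFactor ((Nat.div_le_self d 2).trans hn)]
  refine tendsto_nhds_unique (tendsto_prod_pedFactor.mul tendsto_prod_triangularFactor) ?_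
  simpa only [← prod_mul_distrib, pedFactor_mul_triangularFactor] using hexpand

theorem signedPedSeries_mul_squareTheta : signedPedSeries * squareTheta = triangularTheta := by
  refine (isUnit_expand_triangularTheta two_ne_zero).mul_right_cancel ?_
  rw [mul_assoc, ← triangularTheta_sq, ← signedPedSeries_mul_triangularTheta]
  ring

/-! ### Congruences -/

theorem three_dvd_multisection_signedPedSeries_sub :
    (3 : ℤ⟦X⟧) ∣ multisection 3 1 signedPedSeries -
      8 * (expand 3 three_ne_zero triangularTheta * squareTheta) := by
  obtain ⟨c, hc⟩ : (3 : ℤ⟦X⟧) ∣ squareTheta ^ 3 - expand 3 three_ne_zero squareTheta := mod_cast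
    prime_dvd_pow_sub_expand Nat.prime_three squareTheta
  obtain ⟨d, hd⟩ : (3 : ℤ⟦X⟧) ∣ triangularTheta ^ 3 - expand 3 three_ne_zero triangularTheta :=
    mod_cast prime_dvd_pow_sub_expand Nat.prime_three triangularTheta
  have hcube : triangularTheta * squareTheta ^ 2 =
      expand 3 three_ne_zero squareTheta * signedPedSeries + 3 * (c * signedPedSeries) := by
    linear_combination signedPedSeries * hc - squareTheta ^ 2 * signedPedSeries_mul_squareTheta
  have hmain := multisection_three_one_triangularTheta_mul_squareTheta_sq
  conv_lhs at hmain => rw [hcube, map_add, map_ofNat_mul,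
    multisection_expand_mul _ (by norm_num)]
  rw [← isUnit_squareTheta.dvd_mul_left]
  refine ⟨8 * squareTheta ^ 2 * d - 8 * c * (triangularTheta * expand 2 two_ne_zero triangularTheta)
    - expand 3 three_ne_zero (triangularTheta * squareTheta ^ 2)
    - multisection 3 1 (c * signedPedSeries), ?_⟩
  linear_combination hmain + 8 * squareTheta ^ 2 * hd -
    8 * (triangularTheta * expand 2 two_ne_zero triangularTheta) * hc -
    8 * squareTheta ^ 2 * triangularTheta * triangularTheta_sq

theorem three_dvd_multisection_multisection_signedPedSeries :
    (3 : ℤ⟦X⟧) ∣ multisection 3 2 (multisection 3 1 signedPedSeries) := by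
  obtain ⟨c, hc⟩ := three_dvd_multisection_signedPedSeries_sub
  refine ⟨multisection 3 2 c, ?_⟩
  rw [← map_ofNat_mul, ← hc, map_sub, map_ofNat_mul,
    multisection_expand_mul _ (by norm_num), multisection_three_two_squareTheta]
  ring

theorem eight_dvd_multisection_signedPedSeries_add :
    (8 : ℤ⟦X⟧) ∣ multisection 3 2 (multisection 3 1 signedPedSeries) +
      12 * multisection 3 2 (triangularTheta * expand 2 two_ne_zero triangularTheta) := by
  obtain ⟨S, hS⟩ := two_dvd_squareTheta_sub_one
  have hinv : signedPedSeries = 3 * triangularTheta - 3 * (triangularTheta * squareTheta) +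
      triangularTheta * squareTheta ^ 2 - 8 * (signedPedSeries * S ^ 3) := by
    have hcube : (squareTheta - 1) ^ 3 = 8 * S ^ 3 := by rw [hS]; ring
    linear_combination (3 - 3 * squareTheta + squareTheta ^ 2) * signedPedSeries_mul_squareTheta -
      signedPedSeries * hcube
  have hone : multisection 3 1 signedPedSeries = expand 3 three_ne_zero (3 * triangularTheta +
      3 * (triangularTheta * squareTheta) - 3 * (triangularTheta * squareTheta ^ 2)) -
      12 * (triangularTheta * expand 2 two_ne_zero triangularTheta) +
      8 * (expand 3 three_ne_zero squareTheta *
        (triangularTheta * expand 2 two_ne_zero triangularTheta) -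
        multisection 3 1 (signedPedSeries * S ^ 3)) := by
    conv_lhs => rw [hinv]
    simp only [map_sub, map_add, map_ofNat_mul, multisection_three_one_triangularTheta,
      multisection_three_one_triangularTheta_mul_squareTheta_sq, map_mul (expand 3 _),
      map_pow (expand 3 _), map_ofNat (expand 3 _)]
    have hmain := multisection_three_one_triangularTheta_mul_squareTheta
    rw [map_mul (expand 3 _)] at hmain
    linear_combination -3 * hmain
  rw [hone, map_add, map_sub, map_ofNat_mul, map_ofNat_mul,
    multisection_expand_of_not_dvd _ (by norm_num), zero_sub, neg_add_eq_sub, sub_add_cancel]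
  exact dvd_mul_right 8 _

theorem ped_nine_mul_add_seven_modEq (n : ℕ) :
    (ped (9 * n + 7) : ℤ) ≡
      12 * coeff (3 * n + 2) (triangularTheta * expand 2 two_ne_zero triangularTheta)
        [ZMOD 24] := by
  obtain ⟨a, ha⟩ := three_dvd_multisection_multisection_signedPedSeries
  obtain ⟨b, hb⟩ := eight_dvd_multisection_signedPedSeries_add
  have hcoeff : coeff n (multisection 3 2 (multisection 3 1 signedPedSeries)) =
      (-1) ^ (9 * n + 7) * ped (9 * n + 7) := by
    rw [coeff_multisection, coeff_multisection,
      show 3 * (3 * n + 2) + 1 = 9 * n + 7 by ring, signedPedSeries, coeff_mk]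
  have hmod_three := congrArg (coeff n) ha
  have hmod_eight := congrArg (coeff n) hb
  rw [hcoeff, map_ofNat_mul] at hmod_three
  rw [map_add, hcoeff, map_ofNat_mul, map_ofNat_mul, coeff_multisection] at hmod_eight
  rw [Int.modEq_iff_dvd]
  rcases neg_one_pow_eq_or ℤ (9 * n + 7) with hsign | hsign <;>
    rw [hsign] at hmod_three hmod_eight <;> omega

theorem ped_9n_add_7_congr_225n_add_178 (n : ℕ) :
    ped (9 * n + 7) ≡ ped (225 * n + 178) [MOD 24] := by
  rw [← Int.natCast_modEq_iff]
  calc (ped (9 * n + 7) : ℤ)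
    _ ≡ 12 * coeff (3 * n + 2) (triangularTheta * expand 2 two_ne_zero triangularTheta)
        [ZMOD 24] := ped_nine_mul_add_seven_modEq n
    _ = 12 * coeff (3 * (25 * n + 19) + 2)
        (triangularTheta * expand 2 two_ne_zero triangularTheta) := by
      conv_lhs => rw [← multisection_twentyFive_nine_triangularTheta_mul_expand_two,
        coeff_multisection, show 25 * (3 * n + 2) + 9 = 3 * (25 * n + 19) + 2 by ring]
    _ ≡ ped (9 * (25 * n + 19) + 7) [ZMOD 24] := (ped_nine_mul_add_seven_modEq _).symm
    _ = ped (225 * n + 178) := by rw [show 9 * (25 * n + 19) + 7 = 225 * n + 178 by ring]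
end
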